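/- Let G be a plane graph with no cycle of length divisible by 4, in which no degree-2 vertex lies on a 3-face and which is essentially 3-connected. Then G has at most one 3-face. -/

import Mathlib

/-- The graph obtained from `G` by deleting the vertices of `S`
(the vertices of `S` stay present but become isolated). -/
def deleteVerts {V : Type*} (G : SimpleGraph V) (S : Set V) : SimpleGraph V :=
  SimpleGraph.fromRel fun a b => G.Adj a b ∧ a ∉ S ∧ b ∉ S

/-- `G` is essentially 3-connected: `G` is connected and has no vertex cut `S` with
`|S| ≤ 2` such that `G − S` has two distinct components with at least two vertices
each. -/
def EssentiallyThreeConnected {V : Type*} (G : SimpleGraph V) : Prop :=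
  G.Connected ∧
    ∀ S : Set V, S.ncard ≤ 2 →
      ∀ a a' b b' : V, a ≠ a' → b ≠ b' →
        (deleteVerts G S).Reachable a a' → (deleteVerts G S).Reachable b b' →
        (deleteVerts G S).Reachable a b

/-- A combinatorial plane embedding of `G`, recorded through its list of face
boundaries: every face boundary is a cycle, every edge of `G` lies on exactly two
faces, and Euler's formula `n - e + f = 2` holds. -/
structure PlaneFaces {V : Type*} [Fintype V] [DecidableEq V] (G : SimpleGraph V)
    [DecidableRel G.Adj] where
  /-- the boundary cycles of the faces -/
  faces : List (Σ' v : V, G.Walk v v)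
  isCycle : ∀ f ∈ faces, f.2.IsCycle
  edgeTwice : ∀ e ∈ G.edgeSet,
    (faces.countP fun f => decide (e ∈ f.2.edges)) = 2
  euler : Fintype.card V + faces.length = G.edgeFinset.card + 2

/-!
If two disjoint triangles are joined by disjoint paths of lengths `a`, `b`, `c`, then each of
`a + b`, `a + c`, `b + c` is `3` modulo `4`: the cycles through the first two paths have lengths
`a + b + 2`, `a + b + 3`, `a + b + 4`, none of them divisible by `4`. Adding up the three
congruences gives an even number congruent to `1`. Menger's theorem provides such paths between any
two disjoint triangles all of whose vertices have outer neighbours. Similar counts exclude different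
triangles with a common vertex.

So suppose two 3-faces have the same vertex set `T`. They use up the edges of `T`, so that every
vertex of `T` has at least two neighbours outside `T`. A triangle disjoint from `T` has a vertex
without outer neighbours, and that vertex can be deleted; hence we may assume that every triangle
meets `T`. A longer cycle missing `T` would again be joined to `T` by three disjoint paths, and
congruences modulo `4` exclude this too, so `G - T` is a forest. The ends of a longest path in a
component of this forest belong to forks: vertices with several neighbours of degree two, which
have their other neighbours in `T` and distinct. The lengths of the paths through two forks, and
through a further edge leaving `T`, contradict each other modulo `4`.
-/

section Paths

variable {V : Type*} {G G' : SimpleGraph V} {U W : Set V} {x y z : V} {m n : ℕ}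

/-- `y` can be reached from `x` by a walk in `G` all of whose vertices, ends included, lie
in `U`. -/
def ReachableIn (G : SimpleGraph V) (U : Set V) (x y : V) : Prop :=
  ∃ p : G.Walk x y, ∀ z ∈ p.support, z ∈ U

namespace ReachableIn

theorem left_mem (h : ReachableIn G U x y) : x ∈ U :=
  let ⟨p, hp⟩ := h; hp x p.start_mem_support

theorem right_mem (h : ReachableIn G U x y) : y ∈ U :=
  let ⟨p, hp⟩ := h; hp y p.end_mem_support

theorem refl (hx : x ∈ U) : ReachableIn G U x x :=
  ⟨.nil, by simpa using hx⟩

theorem symm (h : ReachableIn G U x y) : ReachableIn G U y x :=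
  let ⟨p, hp⟩ := h; ⟨p.reverse, by simpa using hp⟩

theorem trans (h : ReachableIn G U x y) (h' : ReachableIn G U y z) : ReachableIn G U x z := by
  obtain ⟨p, hp⟩ := h
  obtain ⟨q, hq⟩ := h'
  exact ⟨p.append q, fun a ha =>
    ((SimpleGraph.Walk.mem_support_append_iff p q).1 ha).elim (hp a) (hq a)⟩

theorem mono (hUW : U ⊆ W) (h : ReachableIn G U x y) : ReachableIn G W x y :=
  let ⟨p, hp⟩ := h; ⟨p, fun z hz => hUW (hp z hz)⟩

theorem mono_graph (hle : G ≤ G') (h : ReachableIn G U x y) : ReachableIn G' U x y :=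
  let ⟨p, hp⟩ := h; ⟨p.mapLe hle, by simpa using hp⟩

theorem of_adj (h : G.Adj x y) (hx : x ∈ U) (hy : y ∈ U) : ReachableIn G U x y :=
  ⟨h.toWalk, by simp [hx, hy]⟩

theorem cons (h : G.Adj x y) (hx : x ∈ U) (h' : ReachableIn G U y z) : ReachableIn G U x z :=
  (of_adj h hx h'.left_mem).trans h'

theorem mem_of_closed {Q : Set V} (h : ReachableIn G U x y) (hx : x ∈ Q)
    (hQ : ∀ a ∈ Q, ∀ b ∈ U, G.Adj a b → b ∈ Q) : y ∈ Q := by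
  obtain ⟨p, hp⟩ := h
  induction p with
  | nil => exact hx
  | cons h p ih =>
    exact ih (hQ _ hx _ (hp _ (by simp)) h) fun z hz => hp z (by simp [hz])

theorem within (h : ReachableIn G U x y) : ReachableIn G {q | ReachableIn G U x q} x y := by
  classical
  obtain ⟨p, hp⟩ := h
  exact ⟨p, fun z hz => ⟨p.takeUntil z hz, fun q hq =>
    hp q (p.support_takeUntil_subset_support hz hq)⟩⟩

/-- The part of a walk before its first vertex in `X` avoids `X`. -/
theorem exists_first_hit {X : Set V} (h : ReachableIn G U x y) (hy : y ∈ X) :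
    ∃ w ∈ X, w ∈ U ∧ ReachableIn G (insert w {q | ReachableIn G (U \ X) x q}) x w := by
  obtain ⟨p, hp⟩ := h
  induction p with
  | nil => exact ⟨_, hy, hp _ (by simp), refl (by simp)⟩
  | @cons a b c hab p ih =>
    have ha : a ∈ U := hp a (by simp)
    by_cases hX : a ∈ X
    · exact ⟨a, hX, ha, refl (by simp)⟩
    obtain ⟨w, hwX, hwU, hw⟩ := ih hy fun z hz => hp z (by simp [hz])
    refine ⟨w, hwX, hwU, cons hab (.inr (refl ⟨ha, hX⟩)) (hw.mono ?_)⟩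
    rintro q (rfl | hq)
    · exact .inl rfl
    · exact .inr (cons hab ⟨ha, hX⟩ hq)

end ReachableIn

/-- There is a path of length `n` from `x` to `y` in `G` with vertex set exactly `U`. -/
def IsPathOn (G : SimpleGraph V) (U : Set V) (x y : V) (n : ℕ) : Prop :=
  ∃ p : G.Walk x y, p.IsPath ∧ p.length = n ∧ {z | z ∈ p.support} = U

namespace IsPathOn

theorem nil (x : V) : IsPathOn G {x} x x 0 :=
  ⟨.nil, .nil, rfl, by simp⟩

theorem of_adj (h : G.Adj x y) : IsPathOn G {x, y} x y 1 :=
  ⟨h.toWalk, SimpleGraph.Walk.IsPath.of_adj h, by simp, by ext; simp⟩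

theorem left_mem (h : IsPathOn G U x y n) : x ∈ U := by
  obtain ⟨p, -, -, rfl⟩ := h
  exact p.start_mem_support

theorem right_mem (h : IsPathOn G U x y n) : y ∈ U := by
  obtain ⟨p, -, -, rfl⟩ := h
  exact p.end_mem_support

theorem symm (h : IsPathOn G U x y n) : IsPathOn G U y x n := by
  obtain ⟨p, hp, rfl, rfl⟩ := h
  exact ⟨p.reverse, hp.reverse, by simp, by simp⟩

theorem append (h : IsPathOn G U x y m) (h' : IsPathOn G W y z n) (hUW : U ∩ W ⊆ {y}) :
    IsPathOn G (U ∪ W) x z (m + n) := by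
  obtain ⟨p, hp, rfl, rfl⟩ := h
  obtain ⟨q, hq, rfl, rfl⟩ := h'
  refine ⟨p.append q, ?_, by simp, by ext; simp⟩
  rw [SimpleGraph.Walk.isPath_def, SimpleGraph.Walk.support_append, List.nodup_append']
  refine ⟨hp.support_nodup, hq.support_nodup.tail, fun a ha ha' => ?_⟩
  have hay : a = y := hUW ⟨ha, List.mem_of_mem_tail ha'⟩
  exact (q.cons_tail_support.symm ▸ hq.support_nodup).notMem (hay ▸ ha')

theorem cons (hxy : G.Adj x y) (h : IsPathOn G U y z n) (hx : x ∉ U) :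
    IsPathOn G (insert x U) x z (n + 1) := by
  have hU : {x, y} ∪ U = insert x U := by
    rw [Set.insert_union, Set.singleton_union, Set.insert_eq_of_mem h.left_mem]
  have key := (of_adj hxy).append h (by rintro a ⟨rfl | rfl, ha⟩ <;> simp_all)
  rwa [hU, Nat.add_comm] at key

theorem uncons (h : IsPathOn G U x y (n + 1)) :
    ∃ q, G.Adj x q ∧ IsPathOn G (U \ {x}) q y n := by
  obtain ⟨_ | ⟨hxq, p⟩, hp, hn, rfl⟩ := h
  · simp at hn
  rw [SimpleGraph.Walk.cons_isPath_iff] at hp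
  exact ⟨_, hxq, p, hp.1, by simpa using hn, by
    ext
    simp only [Set.mem_ofPred_eq, Set.mem_sdiff, Set.mem_singleton_iff,
      SimpleGraph.Walk.support_cons, List.mem_cons]
    grind⟩

theorem eq_of_zero (h : IsPathOn G U x y 0) : x = y ∧ U = {x} := by
  obtain ⟨_ | ⟨_, _⟩, -, hn, rfl⟩ := h
  · simp
  · simp at hn

theorem length_eq_zero (h : IsPathOn G U x x n) : n = 0 := by
  obtain ⟨p, hp, rfl, -⟩ := h
  exact SimpleGraph.Walk.length_eq_zero_iff.2 (SimpleGraph.Walk.isPath_iff_nil.1 hp)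

theorem pos (h : IsPathOn G U x y n) (hxy : x ≠ y) : 0 < n :=
  Nat.pos_of_ne_zero fun hn => hxy (eq_of_zero (hn ▸ h)).1

theorem split (h : IsPathOn G U x y n) (hz : z ∈ U) :
    ∃ U₁ U₂ i j, i + j = n ∧ U₁ ∪ U₂ = U ∧ U₁ ∩ U₂ = {z} ∧
      IsPathOn G U₁ x z i ∧ IsPathOn G U₂ z y j := by
  classical
  obtain ⟨p, hp, rfl, rfl⟩ := h
  have hz' : z ∈ p.support := hz
  have hspec := p.take_spec hz'
  refine ⟨_, _, _, _, ?_, ?_, ?_, ⟨p.takeUntil z hz', hp.takeUntil hz', rfl, rfl⟩,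
    ⟨p.dropUntil z hz', hp.dropUntil hz', rfl, rfl⟩⟩
  · rw [← SimpleGraph.Walk.length_append, hspec]
  · ext a
    simp only [Set.mem_union, Set.mem_ofPred_eq]
    rw [← SimpleGraph.Walk.mem_support_append_iff, hspec]
  · ext a
    simp only [Set.mem_inter_iff, Set.mem_ofPred_eq, Set.mem_singleton_iff]
    refine ⟨fun ⟨h₁, h₂⟩ => ?_, by rintro rfl; simp⟩
    by_contra ha
    rw [← hspec] at hp
    exact hp.ne_of_mem_support_of_append ha h₁ h₂ rfl

theorem reachableIn (h : IsPathOn G U x y n) : ReachableIn G U x y := by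
  obtain ⟨p, -, -, rfl⟩ := h
  exact ⟨p, fun _ => id⟩

theorem reachableIn_right (h : IsPathOn G U x y n) (hz : z ∈ U) (hzx : z ≠ x) :
    ReachableIn G (U \ {x}) z y := by
  obtain ⟨U₁, U₂, i, j, -, hU, hinter, h₁, h₂⟩ := h.split hz
  refine h₂.reachableIn.mono fun q hq => ⟨hU ▸ .inr hq, ?_⟩
  rintro rfl
  exact hzx (hinter.subset ⟨h₁.left_mem, hq⟩).symm

end IsPathOn

theorem ReachableIn.exists_isPathOn (h : ReachableIn G U x y) :
    ∃ U' ⊆ U, ∃ n, IsPathOn G U' x y n := by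
  classical
  obtain ⟨p, hp⟩ := h
  exact ⟨_, fun z hz => hp z (p.support_bypass_subset_support hz),
    _, p.bypass, p.bypass_isPath, rfl, rfl⟩

theorem ReachableIn.exists_adj_last (h : ReachableIn G (insert y U) x y) (hxy : x ≠ y) :
    ∃ p, G.Adj y p ∧ ReachableIn G U x p := by
  obtain ⟨W, hW, n, hpath⟩ := h.symm.exists_isPathOn
  obtain ⟨n, rfl⟩ := Nat.exists_eq_succ_of_ne_zero (hpath.pos hxy.symm).ne'
  obtain ⟨p, hyp, hpx⟩ := hpath.uncons
  exact ⟨p, hyp, (hpx.reachableIn.mono (by simpa using hW)).symm⟩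

end Paths

section Cycles

variable {V : Type*} {G G' : SimpleGraph V} {U W : Set V} {x y : V} {m n : ℕ}

theorem IsPathOn.exists_isCycle (h : IsPathOn G U x y m) (h' : IsPathOn G W x y n)
    (hUW : U ∩ W ⊆ {x, y}) (hxy : x ≠ y) (hmn : 3 ≤ m + n) :
    ∃ c : G.Walk x x, c.IsCycle ∧ c.length = m + n ∧ ∀ z ∈ c.support, z ∈ U ∪ W := by
  obtain ⟨p, hp, rfl, rfl⟩ := h
  obtain ⟨q, hq, rfl, rfl⟩ := h'.symm
  refine ⟨p.append q, hp.isCycle_append hq (fun z hzp hzq => ?_) (by omega), by simp,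
    fun z hz => ?_⟩
  · obtain rfl | rfl := hUW ⟨List.mem_of_mem_tail hzp, List.mem_of_mem_tail hzq⟩
    · exact (p.cons_tail_support.symm ▸ hp.support_nodup).notMem hzp
    · exact (q.cons_tail_support.symm ▸ hq.support_nodup).notMem hzq
  · exact (SimpleGraph.Walk.mem_support_append_iff p q).1 hz

/-- No cycle of `G` has length divisible by 4. -/
def NoFourDvdCycle (G : SimpleGraph V) : Prop :=
  ∀ ⦃u : V⦄ (c : G.Walk u u), c.IsCycle → ¬ 4 ∣ c.length

theorem NoFourDvdCycle.not_dvd_add (hG : NoFourDvdCycle G) (h : IsPathOn G U x y m)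
    (h' : IsPathOn G W x y n) (hUW : U ∩ W ⊆ {x, y}) (hxy : x ≠ y) (hmn : 3 ≤ m + n) :
    ¬ 4 ∣ m + n := by
  obtain ⟨c, hc, hlen, -⟩ := h.exists_isCycle h' hUW hxy hmn
  exact hlen ▸ hG c hc

theorem NoFourDvdCycle.mono (hle : G ≤ G') (hG : NoFourDvdCycle G') : NoFourDvdCycle G :=
  fun u c hc => by simpa using hG (c.mapLe hle) (hc.mapLe hle)

section Triangle

variable {T : Finset V} {s t : V}

theorem exists_third_vertex (hT : T.card = 3) (hs : s ∈ T) (ht : t ∈ T) (hst : s ≠ t) :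
    ∃ r ∈ T, r ≠ s ∧ r ≠ t ∧ ∀ q ∈ T, q = s ∨ q = t ∨ q = r := by
  classical
  obtain ⟨r, hr⟩ : ∃ r, (T.erase s).erase t = {r} := by
    rw [← Finset.card_eq_one, Finset.card_erase_of_mem (by simp [ht, hst.symm]),
      Finset.card_erase_of_mem hs, hT]
  have hmem : ∀ q, (q ≠ t ∧ q ≠ s ∧ q ∈ T) ↔ q = r := fun q => by
    simpa [Finset.ext_iff] using Finset.ext_iff.1 hr q
  obtain ⟨hrt, hrs, hrT⟩ := (hmem r).2 rfl
  exact ⟨r, hrT, hrs, hrt, fun q hq => by by_contra! h; exact h.2.2 ((hmem q).1 ⟨h.2.1, h.1, hq⟩)⟩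

theorem exists_mem_ne (hT : T.card = 3) (s t : V) : ∃ r ∈ T, r ≠ s ∧ r ≠ t := by
  classical
  obtain ⟨r, hr⟩ : ((T.erase s).erase t).Nonempty := by
    rw [← Finset.card_pos]
    have := Finset.pred_card_le_card_erase (s := T) (a := s)
    have := Finset.pred_card_le_card_erase (s := T.erase s) (a := t)
    omega
  simp only [Finset.mem_erase] at hr
  exact ⟨r, hr.2.2, hr.2.1, hr.1⟩

/-- The two arcs of the triangle close such a path up to cycles of lengths `n + 1` and
`n + 2`. -/
theorem NoFourDvdCycle.mod_four_le_one_of_isNClique (hG : NoFourDvdCycle G)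
    (hT : G.IsNClique 3 T) (h : IsPathOn G U s t n) (hs : s ∈ T) (ht : t ∈ T) (hst : s ≠ t)
    (hU : U ∩ T ⊆ {s, t}) : n % 4 ≤ 1 := by
  obtain ⟨r, hr, hrs, hrt, -⟩ := exists_third_vertex hT.card_eq hs ht hst
  have hrU : r ∉ U := fun h => by simpa [hrs, hrt] using hU ⟨h, hr⟩
  have short := IsPathOn.of_adj (hT.isClique hs ht hst)
  have long : IsPathOn G ({s, r} ∪ {r, t}) s t (1 + 1) :=
    (IsPathOn.of_adj (hT.isClique hs hr hrs.symm)).append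
      (IsPathOn.of_adj (hT.isClique hr ht hrt)) (by intro z; grind)
  have hn := h.pos hst
  have h₁ : n = 1 ∨ ¬ 4 ∣ n + 1 := or_iff_not_imp_left.2 fun h1 =>
    hG.not_dvd_add h short (by simp) hst (by omega)
  have h₂ := hG.not_dvd_add h long (by rintro z ⟨hz, (rfl | rfl) | (rfl | rfl)⟩ <;> simp_all) hst
    (by omega)
  omega

end Triangle

section Leg

/-- A path of length `n` with vertex set `P` from `t ∈ T` to `v ∈ C` meeting `T` and `C` only in
its ends. The vertex `t` is called the foot of the leg, and `v` its tip. -/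
structure IsLeg (G : SimpleGraph V) (T : Finset V) (C P : Set V) (t v : V) (n : ℕ) : Prop where
  isPathOn : IsPathOn G P t v n
  foot_mem : t ∈ T
  tip_mem : v ∈ C
  inter_T : P ∩ T ⊆ {t}
  inter_C : P ∩ C ⊆ {v}

variable {T : Finset V} {C P Q A : Set V} {s t v w : V} {k : ℕ}

/-- Two legs with different feet, joined by a path in `C`, make a path between two vertices of the
triangle. -/
theorem IsLeg.mod_four_le_one (hP : IsLeg G T C P s v m) (hQ : IsLeg G T C Q t w n)
    (hG : NoFourDvdCycle G) (hT : G.IsNClique 3 T) (hTC : Disjoint (T : Set V) C) (hst : s ≠ t)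
    (hPQ : ∀ z ∈ P, z ∈ Q → z = v ∧ z = w) (hA : IsPathOn G A v w k) (hAC : A ⊆ C) :
    (m + n + k) % 4 ≤ 1 := by
  have hPA := hP.isPathOn.append hA fun z hz => hP.inter_C ⟨hz.1, hAC hz.2⟩
  have hPAQ := hPA.append hQ.isPathOn.symm <| by
    rintro z ⟨hz | hz, hzQ⟩
    exacts [(hPQ z hz hzQ).2, hQ.inter_C ⟨hzQ, hAC hz⟩]
  have := hG.mod_four_le_one_of_isNClique hT hPAQ hP.foot_mem hQ.foot_mem hst <| by
    rintro z ⟨(hz | hz) | hz, hzT⟩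
    exacts [.inl (hP.inter_T ⟨hz, hzT⟩), (hTC.le_bot ⟨hzT, hAC hz⟩).elim,
      .inr (hQ.inter_T ⟨hz, hzT⟩)]
  omega

theorem IsLeg.not_dvd_of_same_foot (hP : IsLeg G T C P t v m) (hQ : IsLeg G T C Q t w n)
    (hG : NoFourDvdCycle G) (hTC : Disjoint (T : Set V) C)
    (hPQ : ∀ z ∈ P, z ∈ Q → z = t ∨ z = v ∧ z = w) (hA : IsPathOn G A v w k) (hAC : A ⊆ C)
    (hlen : 3 ≤ m + n + k) : ¬ 4 ∣ m + n + k := by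
  have hPA := hP.isPathOn.append hA fun z hz => hP.inter_C ⟨hz.1, hAC hz.2⟩
  have := hG.not_dvd_add hPA hQ.isPathOn
    (by
      rintro z ⟨hz | hz, hzQ⟩
      exacts [(hPQ z hz hzQ).imp_right (·.2), .inr (hQ.inter_C ⟨hzQ, hAC hz⟩)])
    (fun h => hTC.le_bot ⟨hP.foot_mem, h ▸ hQ.tip_mem⟩) (by omega)
  omega

theorem IsLeg.pos (hP : IsLeg G T C P t v n) (hTC : Disjoint (T : Set V) C) : 0 < n :=
  hP.isPathOn.pos fun h => hTC.le_bot ⟨hP.foot_mem, h ▸ hP.tip_mem⟩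

end Leg

end Cycles

section Menger

variable {V : Type*} {G G' : SimpleGraph V} {A B : Set V} {S S' : Set V} {x y : V} {k : ℕ}

/-- Every path from `A` to `B` meets `S`. -/
def Separates (G : SimpleGraph V) (A B S : Set V) : Prop :=
  ∀ a ∈ A, ∀ b ∈ B, ¬ ReachableIn G Sᶜ a b

/-- There are `k` pairwise disjoint connections from `A` to `B`; each is recorded by a vertex set
containing a path from `A` to `B`. -/
def Linked (G : SimpleGraph V) (A B : Set V) (k : ℕ) : Prop :=
  ∃ P : Fin k → Set V, Pairwise (fun i j => Disjoint (P i) (P j)) ∧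
    ∀ i, ∃ a ∈ A, ∃ b ∈ B, ReachableIn G (P i) a b

theorem Separates.symm (h : Separates G A B S) : Separates G B A S :=
  fun b hb a ha hba => h a ha b hb hba.symm

theorem Linked.mono_graph (hle : G ≤ G') (h : Linked G A B k) : Linked G' A B k := by
  obtain ⟨P, hP, hab⟩ := h
  refine ⟨P, hP, fun i => ?_⟩
  obtain ⟨a, ha, b, hb, h⟩ := hab i
  exact ⟨a, ha, b, hb, h.mono_graph hle⟩

theorem Linked.of_finset {X : Finset V} (hX : k ≤ X.card) (P : V → Set V)
    (hP : ∀ z ∈ X, ∀ z' ∈ X, z ≠ z' → Disjoint (P z) (P z'))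
    (hab : ∀ z ∈ X, ∃ a ∈ A, ∃ b ∈ B, ReachableIn G (P z) a b) : Linked G A B k := by
  refine ⟨fun i => P (X.equivFin.symm (Fin.castLE hX i)), fun i j hij => ?_, fun i => ?_⟩
  · refine hP _ (Subtype.coe_prop _) _ (Subtype.coe_prop _) fun h => hij ?_
    simpa [Subtype.coe_inj] using h
  · exact hab _ (Subtype.coe_prop _)

/-- The connections are cut off at their first vertex in `X`, and counting shows that every vertex
of `X` is hit. -/
theorem Linked.exists_ending_at {X : Finset V} (h : Linked G A X k) (hX : X.card ≤ k) :
    ∃ P : V → Set V, (∀ z ∈ X, ∀ z' ∈ X, z ≠ z' → Disjoint (P z) (P z')) ∧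
      ∀ z ∈ X, ∃ a ∈ A, ReachableIn G (P z) a z ∧
        ∀ q ∈ P z, q = z ∨ ReachableIn G (X : Set V)ᶜ a q := by
  obtain ⟨P, hdisj, hP⟩ := h
  have hcut : ∀ i, ∃ w : X, ∃ a ∈ A, w.1 ∈ P i ∧
      ReachableIn G (insert w.1 {q | ReachableIn G (P i \ X) a q}) a w := fun i => by
    obtain ⟨a, ha, b, hb, hab⟩ := hP i
    obtain ⟨w, hwX, hwP, hw⟩ := hab.exists_first_hit hb
    exact ⟨⟨w, hwX⟩, a, ha, hwP, hw⟩
  choose w a ha hwP hw using hcut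
  have hinj : Function.Injective w := fun i j hij => by
    by_contra hne
    exact (hdisj hne).le_bot ⟨hwP i, hij ▸ hwP j⟩
  have hbij : Function.Bijective w := (Fintype.bijective_iff_injective_and_card w).2
    ⟨hinj, le_antisymm (Fintype.card_le_of_injective w hinj) (by simpa using hX)⟩
  obtain ⟨e, -, he⟩ := Function.bijective_iff_has_inverse.1 hbij
  have hsub : ∀ i, insert (w i).1 {q | ReachableIn G (P i \ X) (a i) q} ⊆ P i := by
    rintro i q (rfl | hq)
    exacts [hwP i, hq.right_mem.1]
  refine ⟨fun z => {q | ∃ h : z ∈ X, q ∈ insert z {q | ReachableIn G (P (e ⟨z, h⟩) \ X)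
    (a (e ⟨z, h⟩)) q}}, fun z hz z' hz' hne => ?_, fun z hz => ⟨a (e ⟨z, hz⟩), ha _, ?_, ?_⟩⟩
  · rw [Set.disjoint_left]
    rintro q ⟨_, hq⟩ ⟨_, hq'⟩
    refine (hdisj fun h => hne ?_).le_bot
      ⟨hsub (e ⟨z, hz⟩) (by rwa [he]), hsub (e ⟨z', hz'⟩) (by rwa [he])⟩
    exact congrArg Subtype.val ((he ⟨z, hz⟩).symm.trans ((congrArg w h).trans (he ⟨z', hz'⟩)))
  · have := hw (e ⟨z, hz⟩)
    rw [he] at this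
    exact this.mono fun q hq => ⟨hz, hq⟩
  · rintro q ⟨_, rfl | hq⟩
    exacts [.inl rfl, .inr (hq.mono fun _ h => h.2)]

theorem ReachableIn.deleteEdges_or {U : Set V} {a b : V} (h : ReachableIn G U a b) (x y : V) :
    ReachableIn (G.deleteEdges {s(x, y)}) U a b ∨
      (ReachableIn (G.deleteEdges {s(x, y)}) U a x ∧ ReachableIn (G.deleteEdges {s(x, y)}) U y b) ∨
      ReachableIn (G.deleteEdges {s(x, y)}) U a y ∧
        ReachableIn (G.deleteEdges {s(x, y)}) U x b := by
  obtain ⟨p, hp⟩ := h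
  induction p with
  | nil => exact .inl (.refl (hp _ (by simp)))
  | @cons a c b hac p ih =>
    have ha : a ∈ U := hp a (by simp)
    have ih := ih fun z hz => hp z (by simp [hz])
    by_cases he : s(a, c) = s(x, y)
    · rcases Sym2.eq_iff.1 he with ⟨rfl, rfl⟩ | ⟨rfl, rfl⟩ <;> grind [ReachableIn.refl]
    · have hac' : (G.deleteEdges {s(x, y)}).Adj a c := by simp [hac, he]
      exact ih.imp (.cons hac' ha) (.imp (.imp_left (.cons hac' ha)) (.imp_left (.cons hac' ha)))

theorem Separates.of_insert (hS : Separates (G.deleteEdges {s(x, y)}) A B S)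
    (hy : ∃ b ∈ B, ReachableIn (G.deleteEdges {s(x, y)}) Sᶜ y b)
    (hS' : Separates (G.deleteEdges {s(x, y)}) A (insert x S) S') : Separates G A B S' := by
  obtain ⟨b₀, hb₀, hyb₀⟩ := hy
  intro a ha b hb hab
  have hX : ∀ q, ReachableIn (G.deleteEdges {s(x, y)}) S'ᶜ a q → q ∉ insert x S :=
    fun q hq hqX => hS' a ha q hqX hq
  have havoid : ∀ q, ReachableIn (G.deleteEdges {s(x, y)}) S'ᶜ a q →
      ReachableIn (G.deleteEdges {s(x, y)}) Sᶜ a q :=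
    fun q hq => hq.within.mono fun r hr hrS => hX r hr (.inr hrS)
  refine hS a ha b hb (havoid b (hab.mem_of_closed (Q := {q | ReachableIn _ S'ᶜ a q})
    (.refl hab.left_mem) fun q hq r hr hqr => ?_))
  by_cases he : s(q, r) = s(x, y)
  · rcases Sym2.eq_iff.1 he with ⟨rfl, rfl⟩ | ⟨rfl, rfl⟩
    · exact (hX q hq (.inl rfl)).elim
    · exact (hS a ha b₀ hb₀ ((havoid q hq).trans hyb₀)).elim
  · exact hq.trans (.of_adj (by simp [hqr, he]) hq.right_mem hr)

theorem Separates.disjoint [DecidableEq V] {S : Finset V} {P Q : Set V} {a₀ b₀ a b z w : V}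
    (hS : Separates G A B S) (ha₀ : a₀ ∈ A) (hb₀ : b₀ ∈ B)
    (hx : ReachableIn G (S : Set V)ᶜ a₀ x) (hy : ReachableIn G (S : Set V)ᶜ y b₀)
    (hz : z ∈ insert x S) (hw : w ∈ insert y S) (hzw : z ≠ w) (ha : a ∈ A) (hb : b ∈ B)
    (hP : ∀ q ∈ P, q = z ∨ ReachableIn G (↑(insert x S))ᶜ a q)
    (hQ : ∀ q ∈ Q, q = w ∨ ReachableIn G (↑(insert y S))ᶜ b q) : Disjoint P Q := by
  have havoid : ∀ {c z q : V}, ReachableIn G (↑(insert z S))ᶜ c q →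
      ReachableIn G (S : Set V)ᶜ c q := fun h => h.mono (by simp)
  rw [Set.disjoint_left]
  intro q hqP hqQ
  rcases hP q hqP with rfl | haq <;> rcases hQ q hqQ with hq | hbq
  · exact hzw hq
  · obtain rfl := (Finset.mem_insert.1 hz).resolve_right (havoid hbq).right_mem
    exact hS a₀ ha₀ b hb (hx.trans (havoid hbq).symm)
  · subst hq
    obtain rfl := (Finset.mem_insert.1 hw).resolve_right (havoid haq).right_mem
    exact hS a ha b₀ hb₀ ((havoid haq).trans hy)
  · exact hS a ha b hb ((havoid haq).trans (havoid hbq).symm)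

/-- Gluing step of Menger's theorem: connections from `A` to `S ∪ {x}` and from `B` to `S ∪ {y}`
meet only in `S`, so they can be concatenated, using the edge `xy` once. -/
theorem Linked.glue {S : Finset V} {a₀ b₀ : V} (hle : G' ≤ G) (hxy : G.Adj x y)
    (hS : Separates G' A B S) (ha₀ : a₀ ∈ A) (hb₀ : b₀ ∈ B)
    (hx : ReachableIn G' (S : Set V)ᶜ a₀ x) (hy : ReachableIn G' (S : Set V)ᶜ y b₀)
    (hk : k = S.card + 1) (hA : Linked G' A (insert x (S : Set V)) k)
    (hB : Linked G' B (insert y (S : Set V)) k) : Linked G A B k := by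
  classical
  have hxS : x ∉ S := hx.right_mem
  have hyS : y ∉ S := hy.left_mem
  rw [← Finset.coe_insert] at hA hB
  obtain ⟨P, hPd, hP⟩ := hA.exists_ending_at (by simp [hxS, hk])
  obtain ⟨Q, hQd, hQ⟩ := hB.exists_ending_at (by simp [hyS, hk])
  have hσ : ∀ z ∈ insert x S, (if z = x then y else z) ∈ insert y S := by grind
  have hPQ : ∀ z ∈ insert x S, ∀ z' ∈ insert x S, z ≠ z' →
      Disjoint (P z) (Q (if z' = x then y else z')) := fun z hz z' hz' hne =>
    let ⟨a, ha, _, hqa⟩ := hP z hz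
    let ⟨b, hb, _, hqb⟩ := hQ _ (hσ z' hz')
    hS.disjoint ha₀ hb₀ hx hy hz (hσ z' hz') (by grind) ha hb hqa hqb
  refine .of_finset (X := insert x S) (by simp [hxS, hk])
    (fun z => P z ∪ Q (if z = x then y else z)) (fun z hz z' hz' hne => ?_) fun z hz => ?_
  · simp only [Set.disjoint_union_left, Set.disjoint_union_right]
    refine ⟨⟨hPd z hz z' hz' hne, (hPQ z' hz' z hz hne.symm).symm⟩, hPQ z hz z' hz' hne,
      hQd _ (hσ z hz) _ (hσ z' hz') (by grind)⟩
  · obtain ⟨a, ha, haz, -⟩ := hP z hz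
    obtain ⟨b, hb, hbz, -⟩ := hQ _ (hσ z hz)
    have haz := (haz.mono_graph hle).mono (Set.subset_union_left (t := Q (if z = x then y else z)))
    have hbz := (hbz.mono_graph hle).mono (Set.subset_union_right (s := P z))
    refine ⟨a, ha, b, hb, haz.trans ?_⟩
    split_ifs at hbz ⊢ with h
    · exact .cons (h ▸ hxy) (by simpa [h] using haz.right_mem) hbz.symm
    · exact hbz.symm

theorem Linked.of_deleteEdges {S : Finset V} {a₀ b₀ : V} (hxy : G.Adj x y)
    (h : ∀ S : Finset V, Separates G A B S → k ≤ S.card)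
    (hS : Separates (G.deleteEdges {s(x, y)}) A B S) (hSk : S.card < k)
    (ha₀ : a₀ ∈ A) (hb₀ : b₀ ∈ B)
    (hx : ReachableIn (G.deleteEdges {s(x, y)}) (S : Set V)ᶜ a₀ x)
    (hy : ReachableIn (G.deleteEdges {s(x, y)}) (S : Set V)ᶜ y b₀)
    (ih : ∀ A B : Set V, (∀ S : Finset V, Separates (G.deleteEdges {s(x, y)}) A B S → k ≤ S.card) →
      Linked (G.deleteEdges {s(x, y)}) A B k) : Linked G A B k := by
  classical
  have hX : ∀ S', Separates (G.deleteEdges {s(x, y)}) A (insert x (S : Set V)) S' →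
      Separates G A B S' := fun S' => hS.of_insert ⟨b₀, hb₀, hy⟩
  have hY : ∀ S', Separates (G.deleteEdges {s(x, y)}) B (insert y (S : Set V)) S' →
      Separates G A B S' := fun S' hS' => by
    rw [Sym2.eq_swap] at hS hx hS'
    exact (hS.symm.of_insert ⟨a₀, ha₀, hx.symm⟩ hS').symm
  have hcard : k ≤ (insert x S).card := h _ <| hX _ fun _ _ b hb hab =>
    hab.right_mem (by simpa using hb)
  have := Finset.card_insert_le x S
  exact .glue (G.deleteEdges_le _) hxy hS ha₀ hb₀ hx hy (by omega)
    (ih _ _ fun S' hS' => h S' (hX S' hS')) (ih _ _ fun S' hS' => h S' (hY S' hS'))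

theorem Linked.of_forall_not_adj [Finite V] (hG : ∀ x y, ¬ G.Adj x y)
    (h : ∀ S : Finset V, Separates G A B S → k ≤ S.card) : Linked G A B k := by
  have hfin := Set.toFinite (A ∩ B)
  refine .of_finset (X := hfin.toFinset) (h _ fun a ha b hb hab => ?_) (fun z => {z})
    (fun z _ z' _ hne => by simpa using hne) fun z hz => ?_
  · obtain rfl : b = a := hab.mem_of_closed (Q := {a}) rfl fun c _ d _ hcd => (hG c d hcd).elim
    exact hab.left_mem (by simp [ha, hb])
  · have hz := hfin.mem_toFinset.1 hz
    exact ⟨z, hz.1, z, hz.2, .refl rfl⟩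

/-- **Menger's theorem**: the largest number of disjoint `A`-`B` connections is at least the
smallest size of an `A`-`B` separator. -/
theorem Linked.of_forall_separates [Finite V] (G : SimpleGraph V)
    (h : ∀ S : Finset V, Separates G A B S → k ≤ S.card) : Linked G A B k := by
  induction G using WellFoundedLT.induction generalizing A B with
  | ind G ih =>
  by_cases hG : ∀ x y, ¬ G.Adj x y
  · exact .of_forall_not_adj hG h
  push Not at hG
  obtain ⟨x, y, hxy⟩ := hG
  have hle : G.deleteEdges {s(x, y)} ≤ G := G.deleteEdges_le _
  have hlt : G.deleteEdges {s(x, y)} < G := lt_of_le_of_ne hle fun he => by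
    have := he ▸ hxy
    simp at this
  by_cases hsep : ∀ S : Finset V, Separates (G.deleteEdges {s(x, y)}) A B S → k ≤ S.card
  · exact (ih _ hlt hsep).mono_graph hle
  push Not at hsep
  obtain ⟨S, hS, hSk⟩ := hsep
  have hSG : ¬ Separates G A B S := fun hS => absurd (h S hS) (by omega)
  simp only [Separates, not_forall, not_not] at hSG
  obtain ⟨a, ha, b, hb, hab⟩ := hSG
  rcases hab.deleteEdges_or x y with hab | ⟨hax, hyb⟩ | ⟨hay, hxb⟩
  · exact (hS a ha b hb hab).elim
  · exact .of_deleteEdges hxy h hS hSk ha hb hax hyb fun _ _ => ih _ hlt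
  · rw [Sym2.eq_swap] at hS hay hxb hlt
    exact .of_deleteEdges hxy.symm h hS hSk ha hb hay hxb fun _ _ => ih _ hlt

end Menger

section DisjointTriangles

variable {V : Type*} {G : SimpleGraph V} {S C : Set V} {T : Finset V} {a b c : V} {n : ℕ}

section Inseparable

/-- No set of at most two vertices separates two edges of `G`. -/
def EdgeInseparable (G : SimpleGraph V) : Prop :=
  ∀ S : Set V, S.ncard ≤ 2 → ∀ a a' b b', G.Adj a a' → G.Adj b b' →
    a ∉ S → a' ∉ S → b ∉ S → b' ∉ S → ReachableIn G Sᶜ a b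

/-- However two vertices of `G` are deleted, some vertex of `X` survives and is not isolated. -/
def Robust (G : SimpleGraph V) (X : Set V) : Prop :=
  ∀ S : Set V, S.ncard ≤ 2 → ∃ c ∈ X, c ∉ S ∧ ∃ d, G.Adj c d ∧ d ∉ S

theorem ncard_pair_le_two (a b : V) : ({a, b} : Set V).ncard ≤ 2 := by
  simpa using Set.ncard_insert_le a {b}

variable [Finite V]

theorem exists_notMem_of_ncard_le_two (hS : S.ncard ≤ 2) (hab : a ≠ b) (hac : a ≠ c)
    (hbc : b ≠ c) : a ∉ S ∨ b ∉ S ∨ c ∉ S := by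
  by_contra! h
  exact hS.not_gt ((Set.two_lt_ncard_iff S.toFinite).2 ⟨a, b, c, h.1, h.2.1, h.2.2, hab, hac, hbc⟩)

theorem robust_of_isNClique (hT : G.IsNClique 3 T) (hout : ∀ t ∈ T, ∃ d ∉ T, G.Adj t d) :
    Robust G T := by
  classical
  intro S hS
  obtain ⟨t, ht, htS⟩ : ∃ t ∈ T, t ∉ S := by
    obtain ⟨a, b, c, hab, hac, hbc, rfl⟩ := Finset.card_eq_three.1 hT.card_eq
    rcases exists_notMem_of_ncard_le_two hS hab hac hbc with h | h | h <;> exact ⟨_, by simp, h⟩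
  obtain ⟨d, hdT, htd⟩ := hout t ht
  obtain ⟨r, hr, hrt, -⟩ := exists_mem_ne hT.card_eq t t
  obtain ⟨q, hq, hqt, hqr⟩ := exists_mem_ne hT.card_eq t r
  refine ⟨t, ht, htS, ?_⟩
  rcases exists_notMem_of_ncard_le_two hS (a := d) (b := r) (c := q) (by grind) (by grind) hqr.symm
    with h | h | h
  exacts [⟨d, htd, h⟩, ⟨r, hT.isClique ht hr hrt.symm, h⟩, ⟨q, hT.isClique ht hq hqt.symm, h⟩]

theorem EdgeInseparable.exists_disjoint_legs (hG : EdgeInseparable G) (hcard : T.card = 3)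
    (hT : Robust G T) (hC : Robust G C) :
    ∃ (P : V → Set V) (v : V → V) (n : V → ℕ), (∀ t ∈ T, IsLeg G T C (P t) t (v t) (n t)) ∧
      ∀ s ∈ T, ∀ t ∈ T, s ≠ t → Disjoint (P s) (P t) := by
  have hlink : Linked G C T 3 := .of_forall_separates G fun S hS => by
    by_contra! hlt
    have hS2 : (S : Set V).ncard ≤ 2 := by rw [Set.ncard_coe_finset]; omega
    obtain ⟨c, hcC, hcS, d, hcd, hdS⟩ := hC S hS2
    obtain ⟨t, htT, htS, u, htu, huS⟩ := hT S hS2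
    exact hS c hcC t htT (hG S hS2 c d t u hcd htu hcS hdS htS huS)
  obtain ⟨P, hdisj, hP⟩ := hlink.exists_ending_at hcard.le
  have hleg : ∀ t ∈ T, ∃ Q ⊆ P t, ∃ v n, IsLeg G T C Q t v n := fun t ht => by
    obtain ⟨a, haC, hat, hPT⟩ := hP t ht
    obtain ⟨v, hvC, hvP, hv⟩ := hat.symm.exists_first_hit haC
    obtain ⟨Q, hQ, n, hpath⟩ := hv.exists_isPathOn
    have hQP : Q ⊆ P t := fun q hq => (hQ hq).elim (fun h => h ▸ hvP) fun h => h.right_mem.1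
    refine ⟨Q, hQP, v, n, hpath, ht, hvC, fun q hq => ?_, fun q hq => ?_⟩
    · exact (hPT q (hQP hq.1)).resolve_right fun h => h.right_mem hq.2
    · exact (hQ hq.1).resolve_right fun h => h.right_mem.2 hq.2
  choose! Q hQP v n hleg using hleg
  exact ⟨Q, v, n, hleg, fun s hs t ht hst =>
    (hdisj s hs t ht hst).mono (hQP s hs) (hQP t ht)⟩

end Inseparable

section CycleSeq

/-- `f` runs periodically around a cycle of `G` of length `L`. Indexing a cycle by all of `ℕ` lets
us start it anywhere. -/
structure IsCycleSeq (G : SimpleGraph V) (f : ℕ → V) (L : ℕ) : Prop where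
  three_le : 3 ≤ L
  adj : ∀ i, G.Adj (f i) (f (i + 1))
  periodic : ∀ i, f (i + L) = f i
  injective : ∀ i j, i < j → j < i + L → f i ≠ f j

variable {f : ℕ → V} {L : ℕ}

theorem exists_isCycleSeq_of_isCycle {u : V} {c : G.Walk u u} (hc : c.IsCycle) :
    ∃ f, IsCycleSeq G f c.length ∧ ∀ i, f i ∈ c.support := by
  have hpos : 0 < c.length := by have := hc.three_le_length; omega
  have hmod : ∀ i, i % c.length < c.length := fun i => Nat.mod_lt i hpos
  refine ⟨fun i => c.getVert (i % c.length), ⟨hc.three_le_length, fun i => ?_, fun i => by simp,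
    fun i j hij hj heq => ?_⟩, fun i => c.getVert_mem_support _⟩
  · have hadj := c.adj_getVert_succ (hmod i)
    rcases (Nat.add_one_le_iff.2 (hmod i)).lt_or_eq with h | h
    · rwa [← Nat.mod_eq_of_lt h, Nat.mod_add_mod] at hadj
    · rw [h, c.getVert_length] at hadj
      rwa [← Nat.mod_add_mod, h, Nat.mod_self, c.getVert_zero]
  · have hmodeq : j % c.length = i % c.length :=
      hc.getVert_injOn' (Nat.le_sub_one_of_lt (hmod j)) (Nat.le_sub_one_of_lt (hmod i)) heq.symm
    have := Nat.sub_mod_eq_zero_of_mod_eq hmodeq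
    rw [Nat.mod_eq_of_lt (by omega)] at this
    omega

theorem exists_isCycleSeq_of_isNClique (hT : G.IsNClique 3 T) :
    ∃ f, IsCycleSeq G f 3 ∧ Set.range f = T := by
  classical
  obtain ⟨a, b, c, hab, hac, hbc, rfl⟩ := SimpleGraph.is3Clique_iff.1 hT
  refine ⟨fun i => if i % 3 = 0 then a else if i % 3 = 1 then b else c,
    ⟨le_rfl, fun i => ?_, fun i => by simp, fun i j hij hj => ?_⟩, ?_⟩
  · obtain ⟨h, h'⟩ | ⟨h, h'⟩ | ⟨h, h'⟩ : i % 3 = 0 ∧ (i + 1) % 3 = 1 ∨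
        i % 3 = 1 ∧ (i + 1) % 3 = 2 ∨ i % 3 = 2 ∧ (i + 1) % 3 = 0 := by omega
    all_goals simp [h, h', hab, hbc, hac.symm]
  · have : i % 3 ≠ j % 3 := by omega
    obtain h | h | h : i % 3 = 0 ∨ i % 3 = 1 ∨ i % 3 = 2 := by omega
    all_goals
      obtain h' | h' | h' : j % 3 = 0 ∨ j % 3 = 1 ∨ j % 3 = 2 := by omega
      all_goals simp_all [hab.ne, hac.ne, hbc.ne, hab.ne', hac.ne', hbc.ne']
  · ext z
    simp only [Set.mem_range, Finset.coe_insert, Finset.coe_singleton, Set.mem_insert_iff,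
      Set.mem_singleton_iff]
    refine ⟨by rintro ⟨i, rfl⟩; split_ifs <;> simp, ?_⟩
    rintro (rfl | rfl | rfl)
    exacts [⟨0, by simp⟩, ⟨1, by simp⟩, ⟨2, by simp⟩]

theorem arc_parity {x p L : ℕ} (hp : p ≤ L) (h : (x + p) % 4 ≤ 1) (h' : (x + (L - p)) % 4 ≤ 1) :
    L % 4 = 0 ∨ L % 4 = 1 ∨ (L % 4 = 2 ∧ (x + p) % 4 = (x + 1) % 2) ∨
      (L % 4 = 3 ∧ x % 2 = 1) := by
  omega

/-- If `L ≡ 3`, then all of `a + b`, `a + c`, `b + c` are odd; if `L ≡ 2`, the three arcs cannot add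
up to `L`. -/
theorem mod_four_eq_one_of_arcs {a b c p q L : ℕ} (hL : ¬ 4 ∣ L) (hpq : p + q ≤ L)
    (h₁ : (a + b + p) % 4 ≤ 1 ∧ (a + b + (L - p)) % 4 ≤ 1)
    (h₂ : (a + c + (p + q)) % 4 ≤ 1 ∧ (a + c + (L - (p + q))) % 4 ≤ 1)
    (h₃ : (b + c + q) % 4 ≤ 1 ∧ (b + c + (L - q)) % 4 ≤ 1) : L % 4 = 1 := by
  have h₁ := arc_parity (by omega) h₁.1 h₁.2
  have h₂ := arc_parity hpq h₂.1 h₂.2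
  have h₃ := arc_parity (by omega) h₃.1 h₃.2
  rcases h₁ with h₁ | h₁ | h₁ | h₁
  · omega
  · exact h₁
  · have h₂ : (a + c + (p + q)) % 4 = (a + c + 1) % 2 := by omega
    have h₃ : (b + c + q) % 4 = (b + c + 1) % 2 := by omega
    omega
  · have h₂ : (a + c) % 2 = 1 := by omega
    have h₃ : (b + c) % 2 = 1 := by omega
    omega

namespace IsCycleSeq

theorem isPathOn (hf : IsCycleSeq G f L) (i : ℕ) {d : ℕ} (hd : d < L) :
    IsPathOn G (f '' Set.Icc i (i + d)) (f i) (f (i + d)) d := by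
  induction d generalizing i with
  | zero => simpa using IsPathOn.nil (f i)
  | succ d ih =>
    have hins : insert (f i) (f '' Set.Icc (i + 1) (i + 1 + d)) = f '' Set.Icc i (i + (d + 1)) := by
      rw [← Set.image_insert_eq]
      congr 1
      ext j
      simp only [Set.mem_insert_iff, Set.mem_Icc]
      omega
    rw [← hins, show i + (d + 1) = i + 1 + d by omega]
    refine (ih (i + 1) (by omega)).cons (hf.adj i) ?_
    rintro ⟨j, hj, hji⟩
    exact hf.injective i j (by grind) (by grind) hji.symm

theorem exists_arc (hf : IsCycleSeq G f L) {i j : ℕ} (hij : i < j) (hj : j < i + L) :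
    ∃ A ⊆ Set.range f, IsPathOn G A (f i) (f j) (j - i) := by
  have := hf.isPathOn i (d := j - i) (by omega)
  rw [Nat.add_sub_cancel' hij.le] at this
  exact ⟨_, Set.image_subset_range _ _, this⟩

theorem exists_complementary_arc (hf : IsCycleSeq G f L) {i j : ℕ} (hij : i < j) (hj : j < i + L) :
    ∃ A ⊆ Set.range f, IsPathOn G A (f i) (f j) (L - (j - i)) := by
  have := hf.isPathOn j (d := L - (j - i)) (by omega)
  rw [show j + (L - (j - i)) = i + L by omega, hf.periodic] at this
  exact ⟨_, Set.image_subset_range _ _, this.symm⟩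

theorem exists_index_ge (hf : IsCycleSeq G f L) (a : ℕ) {v : V} (hv : v ∈ Set.range f) :
    ∃ i, a ≤ i ∧ i < a + L ∧ f i = v := by
  have := hf.three_le
  induction a with
  | zero =>
    obtain ⟨i, rfl⟩ := hv
    induction i using Nat.strong_induction_on with
    | _ i ih =>
      by_cases hi : i < L
      · exact ⟨i, i.zero_le, by omega, rfl⟩
      · have heq := hf.periodic (i - L)
        rw [Nat.sub_add_cancel (by omega)] at heq
        exact heq ▸ ih (i - L) (by omega)
  | succ a ih =>
    obtain ⟨i, hai, hi, hiv⟩ := ih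
    obtain rfl | hlt := hai.eq_or_lt
    · exact ⟨a + L, by omega, by omega, (hf.periodic a).trans hiv⟩
    · exact ⟨i, hlt, by omega, hiv⟩

theorem not_dvd (hf : IsCycleSeq G f L) (hG : NoFourDvdCycle G) : ¬ 4 ∣ L := by
  have := hf.three_le
  have hlong := hf.isPathOn 1 (d := L - 1) (by omega)
  rw [show 1 + (L - 1) = 0 + L by omega, hf.periodic] at hlong
  have := hG.not_dvd_add (IsPathOn.of_adj (hf.adj 0)) hlong.symm Set.inter_subset_left
    (hf.adj 0).ne (by omega)
  rwa [Nat.add_sub_cancel' (by omega)] at this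

theorem robust [Finite V] (hf : IsCycleSeq G f L) (hL : 5 ≤ L) : Robust G (Set.range f) := by
  intro S hS
  by_contra! hcon
  have hedge : ∀ i, f i ∈ S ∨ f (i + 1) ∈ S := fun i =>
    or_iff_not_imp_left.2 fun hi => hcon _ ⟨i, rfl⟩ hi _ (hf.adj i)
  have hthree : ∀ i j k, i < j → j < k → k < i + L → f i ∈ S → f j ∈ S → f k ∉ S :=
    fun i j k hij hjk hk hi hj hkS => by
      have := exists_notMem_of_ncard_le_two hS (hf.injective i j hij (by omega))
        (hf.injective i k (by omega) hk) (hf.injective j k hjk (by omega))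
      tauto
  obtain ⟨i, hi⟩ : ∃ i, f i ∈ S := (hedge 0).elim (⟨_, ·⟩) (⟨_, ·⟩)
  rcases hedge (i + 1) with h | h <;> rcases hedge (i + 3) with h' | h' <;>
    exact hthree _ _ _ (by omega) (by omega) (by omega) hi h h'

variable {P Q R : Set V} {s t r : V} {i j k m l : ℕ}

theorem leg_mod_four (hf : IsCycleSeq G f L) (hG : NoFourDvdCycle G) (hT : G.IsNClique 3 T)
    (hTf : Disjoint (T : Set V) (Set.range f)) (hij : i < j) (hj : j < i + L) (hst : s ≠ t)
    (hP : IsLeg G T (Set.range f) P s (f i) m) (hQ : IsLeg G T (Set.range f) Q t (f j) n)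
    (hPQ : Disjoint P Q) : (m + n + (j - i)) % 4 ≤ 1 ∧ (m + n + (L - (j - i))) % 4 ≤ 1 := by
  obtain ⟨A, hA, hpA⟩ := hf.exists_arc hij hj
  obtain ⟨B, hB, hpB⟩ := hf.exists_complementary_arc hij hj
  have hPQ : ∀ z ∈ P, z ∈ Q → z = f i ∧ z = f j := fun z hzP hzQ => (hPQ.le_bot ⟨hzP, hzQ⟩).elim
  exact ⟨hP.mod_four_le_one hQ hG hT hTf hst hPQ hpA hA,
    hP.mod_four_le_one hQ hG hT hTf hst hPQ hpB hB⟩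

theorem length_mod_four_of_lt (hf : IsCycleSeq G f L) (hG : NoFourDvdCycle G)
    (hT : G.IsNClique 3 T) (hTf : Disjoint (T : Set V) (Set.range f))
    (hij : i < j) (hjk : j < k) (hk : k < i + L) (hst : s ≠ t) (hsr : s ≠ r) (htr : t ≠ r)
    (hP : IsLeg G T (Set.range f) P s (f i) l) (hQ : IsLeg G T (Set.range f) Q t (f j) m)
    (hR : IsLeg G T (Set.range f) R r (f k) n) (hPQ : Disjoint P Q) (hPR : Disjoint P R)
    (hQR : Disjoint Q R) : L % 4 = 1 := by
  have hPR := hf.leg_mod_four hG hT hTf (hij.trans hjk) hk hsr hP hR hPR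
  rw [show k - i = (j - i) + (k - j) by omega] at hPR
  exact mod_four_eq_one_of_arcs (hf.not_dvd hG) (by omega)
    (hf.leg_mod_four hG hT hTf hij (by omega) hst hP hQ hPQ) hPR
    (hf.leg_mod_four hG hT hTf hjk (by omega) htr hQ hR hQR)

/-- Three disjoint legs from `T` to the cycle, with the tips in the order `r`, `s`, `t`. -/
theorem exists_sorted_legs [Finite V] (hf : IsCycleSeq G f L) (hE : EdgeInseparable G)
    (hcard : T.card = 3) (hrT : Robust G T) (hrf : Robust G (Set.range f)) :
    ∃ (P : V → Set V) (i : V → ℕ) (n : V → ℕ),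
      (∀ t ∈ T, IsLeg G T (Set.range f) (P t) t (f (i t)) (n t)) ∧
      (∀ s ∈ T, ∀ t ∈ T, s ≠ t → Disjoint (P s) (P t)) ∧
      ∃ r ∈ T, ∃ s ∈ T, ∃ t ∈ T, i r < i s ∧ i s < i t ∧ i t < i r + L := by
  obtain ⟨P, v, n, hleg, hdisj⟩ := hE.exists_disjoint_legs hcard hrT hrf
  have hidx : ∀ t ∈ T, ∃ i < L, IsLeg G T (Set.range f) (P t) t (f i) (n t) := fun t ht => by
    obtain ⟨i, -, hi, hfi⟩ := hf.exists_index_ge 0 (hleg t ht).tip_mem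
    exact ⟨i, by omega, hfi ▸ hleg t ht⟩
  choose! i hi hleg using hidx
  have hne : ∀ s ∈ T, ∀ t ∈ T, s ≠ t → i s ≠ i t := fun s hs t ht hst heq =>
    (hdisj s hs t ht hst).le_bot ⟨(hleg s hs).isPathOn.right_mem,
      heq ▸ (hleg t ht).isPathOn.right_mem⟩
  have hT : T.Nonempty := Finset.card_pos.1 (by omega)
  obtain ⟨r, hr, hmin⟩ := T.exists_min_image i hT
  obtain ⟨t, ht, hmax⟩ := T.exists_max_image i hT
  obtain ⟨s, hs, hsr, hst⟩ := exists_mem_ne hcard r t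
  exact ⟨P, i, n, hleg, hdisj, r, hr, s, hs, t, ht, (hmin s hs).lt_of_ne (hne r hr s hs hsr.symm),
    (hmax s hs).lt_of_ne (hne s hs t ht hst), (hi t ht).trans_le (Nat.le_add_left _ _)⟩

theorem length_mod_four [Finite V] (hf : IsCycleSeq G f L) (hG : NoFourDvdCycle G)
    (hE : EdgeInseparable G) (hT : G.IsNClique 3 T) (hrT : Robust G T)
    (hTf : Disjoint (T : Set V) (Set.range f)) (hrf : Robust G (Set.range f)) : L % 4 = 1 := by
  obtain ⟨P, i, n, hleg, hdisj, s, hs, t, ht, r, hr, hst, htr, hrs⟩ :=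
    hf.exists_sorted_legs hE hT.card_eq hrT hrf
  have hne : ∀ {x y}, i x < i y → x ≠ y := fun h h' => h.ne (congrArg i h')
  exact hf.length_mod_four_of_lt hG hT hTf hst htr hrs (hne hst) (hne (hst.trans htr)) (hne htr)
    (hleg s hs) (hleg t ht) (hleg r hr) (hdisj s hs t ht (hne hst))
    (hdisj s hs r hr (hne (hst.trans htr))) (hdisj t ht r hr (hne htr))

end IsCycleSeq

end CycleSeq

section TwoTriangles

variable {T' : Finset V} {P : Set V} {v w w' t t' : V}

theorem not_disjoint_of_isNClique [Finite V] (hG : NoFourDvdCycle G) (hE : EdgeInseparable G)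
    (hT : G.IsNClique 3 T) (hT' : G.IsNClique 3 T') (hrT : Robust G T) (hrT' : Robust G T') :
    ¬ Disjoint T T' := fun hdisj => by
  obtain ⟨f, hf, hrange⟩ := exists_isCycleSeq_of_isNClique hT'
  have := hf.length_mod_four hG hE hT hrT (by simpa [hrange] using hdisj)
    (by rwa [hrange])
  omega

theorem eq_of_two_common_vertices (hG : NoFourDvdCycle G) (hT : G.IsNClique 3 T)
    (hT' : G.IsNClique 3 T') (hab : a ≠ b) (ha : a ∈ T) (hb : b ∈ T) (ha' : a ∈ T')
    (hb' : b ∈ T') : T = T' := by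
  obtain ⟨c, hc, hca, hcb, hT3⟩ := exists_third_vertex hT.card_eq ha hb hab
  obtain ⟨d, hd, hda, hdb, hT'3⟩ := exists_third_vertex hT'.card_eq ha' hb' hab
  have hpath : ∀ {X : Finset V} {x}, G.IsNClique 3 X → a ∈ X → b ∈ X → x ∈ X → x ≠ a → x ≠ b →
      IsPathOn G ({a, x} ∪ {x, b}) a b (1 + 1) := fun hX ha hb hx hxa hxb =>
    (IsPathOn.of_adj (hX.isClique ha hx hxa.symm)).append
      (IsPathOn.of_adj (hX.isClique hx hb hxb)) (by intro z; grind)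
  by_cases hcd : c = d
  · ext z
    grind
  · exact (hG.not_dvd_add (hpath hT ha hb hc hca hcb) (hpath hT' ha' hb' hd hda hdb)
      (by intro z; grind) hab (by omega) (by omega)).elim

/-- A path between two triangles with common vertex `v`, avoiding `v`, closes up through `v` to
cycles of lengths `n + 2`, `n + 3` and `n + 4`. -/
theorem mod_four_of_path_between_triangles (hG : NoFourDvdCycle G) (hvt : G.Adj v t)
    (hvt' : G.Adj v t') (htt' : G.Adj t t') (hvw : G.Adj v w) (hvw' : G.Adj v w')
    (hww' : G.Adj w w') (hP : IsPathOn G P t w n) (hv : v ∉ P) (ht' : t' ∉ P) (hw' : w' ∉ P)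
    (htw : t ≠ w) (hne : t' ≠ w') : n % 4 = 3 := by
  have htP := hP.left_mem
  have hwP := hP.right_mem
  have h₂ := (IsPathOn.of_adj hvw).cons hvt.symm (by grind [hvt.ne])
  have h₃ := ((IsPathOn.of_adj hvw).cons hvt'.symm (by grind [hvt'.ne])).cons htt'
    (by grind [hvt.ne, htt'.ne])
  have h₄ := ((((IsPathOn.of_adj hww'.symm).cons hvw' (by grind [hvw.ne, hvw'.ne])).cons hvt'.symm
    (by grind [hvt'.ne])).cons htt' (by grind [hvt.ne, htt'.ne]))
  have hn := hP.pos htw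
  have h₂ := hG.not_dvd_add hP h₂ (by intro z; grind) htw (by omega)
  have h₃ := hG.not_dvd_add hP h₃ (by intro z; grind) htw (by omega)
  have h₄ := hG.not_dvd_add hP h₄ (by intro z; grind) htw (by omega)
  omega

theorem not_inter_eq_singleton [Finite V] (hG : NoFourDvdCycle G) (hE : EdgeInseparable G)
    (hT : G.IsNClique 3 T) (hT' : G.IsNClique 3 T') (hrT : Robust G T) (hrT' : Robust G T')
    (hv : v ∈ T) (hv' : v ∈ T') (huniq : ∀ z ∈ T, z ∈ T' → z = v) : False := by
  obtain ⟨P, w, n, hleg, hdisj⟩ := hE.exists_disjoint_legs hT.card_eq hrT hrT'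
  obtain ⟨t, ht, htv, -⟩ := exists_mem_ne hT.card_eq v v
  obtain ⟨s, hs, hsv, hst⟩ := exists_mem_ne hT.card_eq v t
  have hvP : ∀ x ∈ T, x ≠ v → v ∉ P x := fun x hx hxv h => hxv ((hleg x hx).inter_T ⟨h, hv⟩).symm
  have hw : ∀ x ∈ T, x ≠ v → w x ≠ v := fun x hx hxv h =>
    hvP x hx hxv (h ▸ (hleg x hx).isPathOn.right_mem)
  have hwne : ∀ x ∈ T, ∀ y ∈ T, x ≠ y → w x ∉ P y := fun x hx y hy hxy h =>
    (hdisj x hx y hy hxy).le_bot ⟨(hleg x hx).isPathOn.right_mem, h⟩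
  have hwadj : G.Adj (w t) (w s) := hT'.isClique (hleg t ht).tip_mem (hleg s hs).tip_mem
    fun h => hwne t ht s hs hst.symm (h ▸ (hleg s hs).isPathOn.right_mem)
  have hmod : ∀ x ∈ T, ∀ y ∈ T, x ≠ v → y ≠ v → x ≠ y → G.Adj (w x) (w y) → n x % 4 = 3 :=
    fun x hx y hy hxv hyv hxy hadj => mod_four_of_path_between_triangles hG
      (hT.isClique hv hx hxv.symm) (hT.isClique hv hy hyv.symm) (hT.isClique hx hy hxy)
      (hT'.isClique hv' (hleg x hx).tip_mem (hw x hx hxv).symm)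
      (hT'.isClique hv' (hleg y hy).tip_mem (hw y hy hyv).symm) hadj (hleg x hx).isPathOn
      (hvP x hx hxv) (fun h => hxy ((hleg x hx).inter_T ⟨h, hy⟩).symm) (hwne y hy x hx hxy.symm)
      (fun h => hxv (huniq x hx (h ▸ (hleg x hx).tip_mem)))
      fun h => hyv (huniq y hy (h ▸ (hleg y hy).tip_mem))
  have := hmod t ht s hs htv hsv hst.symm hwadj
  have := hmod s hs t ht hsv htv hst hwadj.symm
  have hPt := (hleg t ht).isPathOn
  have hPs := (hleg s hs).isPathOn
  have hts := Set.disjoint_left.1 (hdisj t ht s hs hst.symm)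
  have hlong := (hPt.append (IsPathOn.of_adj hwadj) (z := w s)
    (by rintro z ⟨hz, rfl | rfl⟩; exacts [rfl, (hts hz hPs.right_mem).elim])).append hPs.symm
    (by
      rintro z ⟨hz | rfl | rfl, hz'⟩
      exacts [(hts hz hz').elim, (hts hPt.right_mem hz').elim, rfl])
  have := hG.not_dvd_add hlong (IsPathOn.of_adj (hT.isClique ht hs hst.symm)) (by intro; simp)
    hst.symm (by omega)
  omega

theorem eq_of_isNClique_three [Finite V] (hG : NoFourDvdCycle G) (hE : EdgeInseparable G)
    (hT : G.IsNClique 3 T) (hT' : G.IsNClique 3 T') (hrT : Robust G T) (hrT' : Robust G T') :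
    T = T' := by
  obtain ⟨v, hv, hv'⟩ := Finset.not_disjoint_iff.1 (not_disjoint_of_isNClique hG hE hT hT' hrT hrT')
  by_cases huniq : ∀ z ∈ T, z ∈ T' → z = v
  · exact (not_inter_eq_singleton hG hE hT hT' hrT hrT' hv hv' huniq).elim
  · push Not at huniq
    obtain ⟨z, hz, hz', hzv⟩ := huniq
    exact eq_of_two_common_vertices hG hT hT' hzv hz hv hz' hv'

end TwoTriangles

end DisjointTriangles

section Obstructions

variable {V : Type*} {G : SimpleGraph V} {S : Set V} {T : Finset V} {a b x y z : V}

theorem deleteVerts_adj : (deleteVerts G S).Adj a b ↔ G.Adj a b ∧ a ∉ S ∧ b ∉ S := by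
  rw [deleteVerts, SimpleGraph.fromRel_adj]
  grind [G.adj_comm, SimpleGraph.Adj.ne]

theorem deleteVerts_le : deleteVerts G S ≤ G := fun _ _ h => (deleteVerts_adj.1 h).1

/-- What remains of a graph with two 3-faces when both have the vertex set `T`. -/
structure Obstruction (G : SimpleGraph V) (T : Finset V) : Prop where
  noFour : NoFourDvdCycle G
  insep : EdgeInseparable G
  isNClique : G.IsNClique 3 T
  exists_two_adj_notMem : ∀ t ∈ T, ∃ d d', d ≠ d' ∧ d ∉ T ∧ d' ∉ T ∧ G.Adj t d ∧ G.Adj t d'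
  exists_adj_ne : ∀ v w, G.Adj v w → ∃ w' ≠ w, G.Adj v w'

/-- An obstruction in which no triangle is disjoint from `T`. -/
structure ReducedObstruction (G : SimpleGraph V) (T : Finset V) : Prop
    extends Obstruction G T where
  not_disjoint : ∀ T', G.IsNClique 3 T' → ¬ Disjoint T T'

section Reduction

theorem EdgeInseparable.deleteVerts_singleton (hG : EdgeInseparable G) (hxy : G.Adj x y)
    (hxz : x ≠ z) (hyz : y ≠ z) (hz : ∀ q, G.Adj z q → q = x ∨ q = y) :
    EdgeInseparable (deleteVerts G {z}) := by
  intro S hS a a' b b' haa' hbb' ha ha' hb hb'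
  let R := ReachableIn (deleteVerts G {z}) Sᶜ
  have hadj : ∀ {p q}, G.Adj p q → p ≠ z → q ≠ z → (deleteVerts G {z}).Adj p q :=
    fun h hp hq => deleteVerts_adj.2 ⟨h, hp, hq⟩
  have hstep : ∀ {p q}, R a p → q ∉ S → G.Adj p q → p ≠ z → q ≠ z → R a q :=
    fun h hq hpq hpz hqz => h.trans (.of_adj (hadj hpq hpz hqz) h.right_mem hq)
  have haz := (deleteVerts_adj.1 haa').2.1
  have hbz := (deleteVerts_adj.1 hbb').2.1
  have key : b ∈ {q | q ≠ z ∧ R a q ∨ q = z ∧ (R a x ∨ R a y)} := by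
    refine (hG S hS a a' b b' (deleteVerts_le haa') (deleteVerts_le hbb') ha ha' hb
      hb').mem_of_closed (.inl ⟨haz, .refl ha⟩) fun p hp q hq hpq => ?_
    rcases hp with ⟨hpz, hp⟩ | ⟨hpz, hp⟩ <;> by_cases hqz : q = z
    · subst hqz
      rcases hz p hpq.symm with rfl | rfl
      exacts [.inr ⟨rfl, .inl hp⟩, .inr ⟨rfl, .inr hp⟩]
    · exact .inl ⟨hqz, hstep hp hq hpq hpz hqz⟩
    · exact (hpq.ne (hpz.trans hqz.symm)).elim
    · refine .inl ⟨hqz, ?_⟩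
      rcases hz q (hpz ▸ hpq) with rfl | rfl <;> rcases hp with hp | hp
      exacts [hp, hstep hp hq hxy.symm hyz hqz, hstep hp hq hxy hxz hqz, hp]
  exact (key.resolve_right fun h => hbz h.1).2

namespace Obstruction

theorem robust [Finite V] (hO : Obstruction G T) : Robust G T :=
  robust_of_isNClique hO.isNClique fun t ht =>
    let ⟨d, _, _, hd, _, htd, _⟩ := hO.exists_two_adj_notMem t ht
    ⟨d, hd, htd⟩

/-- Otherwise `y` would separate the edge `xz` from the triangle `T`. -/
theorem exists_adj_ne_ne (hO : Obstruction G T) (hxz : G.Adj x z) (hx : x ∉ T) (hz : z ∉ T)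
    (hxy : x ≠ y) (hyz : y ≠ z) (hN : ∀ q, G.Adj z q → q = x ∨ q = y) :
    ∃ q, q ≠ y ∧ q ≠ z ∧ G.Adj x q := by
  by_contra! hcon
  obtain ⟨s, hs, hsy, -⟩ := exists_mem_ne hO.isNClique.card_eq y y
  obtain ⟨t, ht, hts, hty⟩ := exists_mem_ne hO.isNClique.card_eq s y
  have hreach := hO.insep {y} (by simp) x z s t hxz (hO.isNClique.isClique hs ht hts.symm)
    hxy hyz.symm hsy hty
  have : s ∈ ({x, z} : Set V) := hreach.mem_of_closed (by simp) <| by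
    rintro a (rfl | rfl) b hb hab
    · exact .inr (by by_contra h; exact hcon b hb h hab)
    · exact .inl ((hN b hab).resolve_right hb)
  rcases this with rfl | rfl <;> contradiction

theorem deleteVerts_singleton (hO : Obstruction G T) (hxy : G.Adj x y) (hxz : G.Adj x z)
    (hyz : G.Adj y z) (hx : x ∉ T) (hy : y ∉ T) (hz : z ∉ T)
    (hN : ∀ q, G.Adj z q → q = x ∨ q = y) : Obstruction (deleteVerts G {z}) T := by
  obtain ⟨x', hx'y, hx'z, hxx'⟩ := hO.exists_adj_ne_ne hxz hx hz hxy.ne hyz.ne hN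
  obtain ⟨y', hy'x, hy'z, hyy'⟩ := hO.exists_adj_ne_ne hyz hy hz hxy.ne' hxz.ne
    fun q hq => (hN q hq).symm
  have hTz : ∀ t ∈ T, t ≠ z := fun t ht h => hz (h ▸ ht)
  refine ⟨hO.noFour.mono deleteVerts_le, hO.insep.deleteVerts_singleton hxy hxz.ne hyz.ne hN,
    ⟨fun s hs t ht hst => deleteVerts_adj.2
      ⟨hO.isNClique.isClique hs ht hst, hTz s hs, hTz t ht⟩, hO.isNClique.card_eq⟩,
    fun t ht => ?_, fun v w hvw => ?_⟩
  · obtain ⟨d, d', hne, hd, hd', htd, htd'⟩ := hO.exists_two_adj_notMem t ht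
    have hdz : ∀ {d}, G.Adj t d → (deleteVerts G {z}).Adj t d := fun h =>
      deleteVerts_adj.2 ⟨h, hTz t ht, by rintro rfl; rcases hN t h.symm with rfl | rfl <;> simp_all⟩
    exact ⟨d, d', hne, hd, hd', hdz htd, hdz htd'⟩
  · obtain ⟨hvw, hvz, -⟩ := deleteVerts_adj.1 hvw
    suffices ∃ w' ≠ w, w' ≠ z ∧ G.Adj v w' from
      let ⟨w', hne, hw'z, h⟩ := this
      ⟨w', hne, deleteVerts_adj.2 ⟨h, hvz, hw'z⟩⟩
    by_cases hadj : G.Adj z v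
    · rcases hN v hadj with rfl | rfl
      · by_cases hw : w = y
        exacts [⟨x', hw ▸ hx'y, hx'z, hxx'⟩, ⟨y, Ne.symm hw, hyz.ne, hxy⟩]
      · by_cases hw : w = x
        exacts [⟨y', hw ▸ hy'x, hy'z, hyy'⟩, ⟨x, Ne.symm hw, hxz.ne, hxy.symm⟩]
    · obtain ⟨w', hne, h⟩ := hO.exists_adj_ne v w hvw
      exact ⟨w', hne, fun h' => hadj (h' ▸ h.symm), h⟩

theorem exists_lt [Finite V] (hO : Obstruction G T) {T' : Finset V} (hT' : G.IsNClique 3 T')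
    (hdisj : Disjoint T T') : ∃ H < G, Obstruction H T := by
  obtain ⟨z, hz, hN⟩ : ∃ z ∈ T', ∀ d, G.Adj z d → d ∈ T' := by
    by_contra! h
    exact not_disjoint_of_isNClique hO.noFour hO.insep hO.isNClique hT' hO.robust
      (robust_of_isNClique hT' fun t ht => let ⟨d, h, hd⟩ := h t ht; ⟨d, hd, h⟩) hdisj
  obtain ⟨x, hx, hxz, -⟩ := exists_mem_ne hT'.card_eq z z
  obtain ⟨y, hy, hyx, hyz, hT'3⟩ := exists_third_vertex hT'.card_eq hx hz hxz
  have hnot : ∀ v ∈ T', v ∉ T := fun v hv => Finset.disjoint_right.1 hdisj hv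
  have hlt : deleteVerts G {z} ≠ G := fun h =>
    (deleteVerts_adj.1 (h.symm ▸ hT'.isClique hx hz hxz : (deleteVerts G {z}).Adj x z)).2.2 rfl
  refine ⟨deleteVerts G {z}, deleteVerts_le.lt_of_ne hlt, hO.deleteVerts_singleton
    (hT'.isClique hx hy hyx.symm) (hT'.isClique hx hz hxz) (hT'.isClique hy hz hyz)
    (hnot x hx) (hnot y hy) (hnot z hz) fun q hq => ?_⟩
  have := hT'3 q (hN q hq)
  grind [hq.ne]

theorem exists_reduced [Finite V] (hO : Obstruction G T) : ∃ H, ReducedObstruction H T := by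
  induction G using WellFoundedLT.induction with
  | _ G ih =>
    by_cases h : ∀ T', G.IsNClique 3 T' → ¬ Disjoint T T'
    · exact ⟨G, hO, h⟩
    · push Not at h
      obtain ⟨T', hT', hdisj⟩ := h
      obtain ⟨H, hlt, hH⟩ := hO.exists_lt hT' hdisj
      exact ih H hlt hH

end Obstruction

end Reduction

end Obstructions

section CyclesOffTriangle

variable {V : Type*} {G : SimpleGraph V} {T : Finset V} {f : ℕ → V} {L : ℕ}

/-- The vertices outside both the triangle `T` and the cycle `C`. -/
def outside (T : Finset V) (C : Set V) : Set V := {z | z ∉ T ∧ z ∉ C}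

/-- A cycle disjoint from the triangle `T` of a reduced obstruction. -/
structure OffCycle (G : SimpleGraph V) (T : Finset V) (f : ℕ → V) (L : ℕ) : Prop
    extends ReducedObstruction G T, IsCycleSeq G f L where
  disjoint : Disjoint (T : Set V) (Set.range f)

namespace OffCycle

theorem five_le (hC : OffCycle G T f L) : 5 ≤ L := by
  classical
  have := hC.three_le
  have := hC.not_dvd hC.noFour
  suffices L ≠ 3 by omega
  rintro rfl
  have h₂₀ : G.Adj (f 2) (f 0) := hC.periodic 0 ▸ hC.adj 2
  refine hC.not_disjoint {f 0, f 1, f 2}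
    (SimpleGraph.is3Clique_triple_iff.2 ⟨hC.adj 0, h₂₀.symm, hC.adj 1⟩) ?_
  rw [← Finset.disjoint_coe]
  refine hC.disjoint.mono_right fun z hz => ?_
  simp only [Finset.coe_insert, Finset.coe_singleton, Set.mem_insert_iff,
    Set.mem_singleton_iff] at hz
  rcases hz with rfl | rfl | rfl <;> exact ⟨_, rfl⟩

theorem robust_range [Finite V] (hC : OffCycle G T f L) : Robust G (Set.range f) :=
  hC.toIsCycleSeq.robust hC.five_le

theorem length_mod_four [Finite V] (hC : OffCycle G T f L) : L % 4 = 1 :=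
  hC.toIsCycleSeq.length_mod_four hC.noFour hC.insep hC.isNClique hC.toObstruction.robust
    hC.disjoint hC.robust_range

end OffCycle

variable {U W P Q R : Set V} {v w x y z s t r : V} {i j k l m n : ℕ}

theorem ReducedObstruction.add_mod_four [Finite V] (hO : ReducedObstruction G T)
    (hU : IsPathOn G U x y m) (hW : IsPathOn G W x y n) (hUW : U ∩ W ⊆ {x, y}) (hxy : x ≠ y)
    (hmn : 3 ≤ m + n) (hUT : Disjoint (T : Set V) U) (hWT : Disjoint (T : Set V) W) :
    (m + n) % 4 = 1 := by
  obtain ⟨c, hc, hlen, hsupp⟩ := hU.exists_isCycle hW hUW hxy hmn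
  obtain ⟨f, hf, hfc⟩ := exists_isCycleSeq_of_isCycle hc
  have : OffCycle G T f c.length := ⟨hO, hf, (hUT.union_right hWT).mono_right <| by
    rintro _ ⟨i, rfl⟩
    exact hsupp _ (hfc i)⟩
  exact hlen ▸ this.length_mod_four

theorem IsLeg.reachableIn_outside {C : Set V} (hP : IsLeg G T C P t v n) (hz : z ∈ P)
    (hzT : z ∉ T) : ReachableIn G (insert v (outside T C)) z v := by
  refine (hP.isPathOn.reachableIn_right hz fun h => hzT (h ▸ hP.foot_mem)).mono fun q hq => ?_
  exact or_iff_not_imp_left.2 fun hqv =>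
    ⟨fun h => hq.2 (hP.inter_T ⟨hq.1, h⟩), fun h => hqv (hP.inter_C ⟨hq.1, h⟩)⟩

namespace OffCycle

/-- If `n`, `p`, `q` are the lengths of the path and the two arcs between its ends, then
`n + p ≡ n + q ≡ p + q ≡ 1` modulo 4, which is impossible. -/
theorem no_ear [Finite V] (hC : OffCycle G T f L) (hij : i < j) (hj : j < i + L)
    (hU : IsPathOn G U (f i) (f j) n) (hUT : Disjoint (T : Set V) U)
    (hUf : U ∩ Set.range f ⊆ {f i, f j}) (h₁ : 3 ≤ n + (j - i)) (h₂ : 3 ≤ n + (L - (j - i))) :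
    False := by
  have hne := hC.injective i j hij hj
  obtain ⟨A, hA, hpA⟩ := hC.exists_arc hij hj
  obtain ⟨B, hB, hpB⟩ := hC.exists_complementary_arc hij hj
  have := hC.add_mod_four hU hpA (fun z hz => hUf ⟨hz.1, hA hz.2⟩) hne h₁ hUT
    (hC.disjoint.mono_right hA)
  have := hC.add_mod_four hU hpB (fun z hz => hUf ⟨hz.1, hB hz.2⟩) hne h₂ hUT
    (hC.disjoint.mono_right hB)
  have := hC.length_mod_four
  omega

theorem no_chord [Finite V] (hC : OffCycle G T f L) (hr : r ∈ Set.range f)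
    (h : G.Adj (f (i + 1)) r) : r = f i ∨ r = f (i + 2) := by
  obtain ⟨j, hij, hj, rfl⟩ := hC.exists_index_ge (i + 1) hr
  have hne : i + 1 ≠ j := fun h' => h.ne (congrArg f h')
  by_contra! hcon
  have h₂ : j ≠ i + 2 := fun h' => hcon.2 (congrArg f h')
  have hL : j ≠ i + L := fun h' => hcon.1 (h' ▸ hC.periodic i)
  refine hC.no_ear (lt_of_le_of_ne hij hne) hj (IsPathOn.of_adj h) ?_ Set.inter_subset_left
    (by omega) (by omega)
  refine hC.disjoint.mono_right ?_
  rintro z (rfl | rfl) <;> exact ⟨_, rfl⟩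

theorem exists_index_lt (hC : OffCycle G T f L) (hv : v ∈ Set.range f) (hw : w ∈ Set.range f)
    (hvw : v ≠ w) : ∃ i j, i < j ∧ j < i + L ∧ f i = v ∧ f j = w := by
  obtain ⟨i, rfl⟩ := hv
  obtain ⟨j, hij, hj, rfl⟩ := hC.exists_index_ge i hw
  exact ⟨i, j, hij.lt_of_ne fun h => hvw (congrArg f h), hj, rfl, rfl⟩

theorem eq_of_adj_outside [Finite V] (hC : OffCycle G T f L) (hv : v ∈ Set.range f)
    (hw : w ∈ Set.range f) (hvx : G.Adj v x) (hwy : G.Adj w y)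
    (hxy : ReachableIn G (outside T (Set.range f)) x y) : v = w := by
  by_contra hvw
  obtain ⟨i, j, hij, hj, rfl, rfl⟩ := hC.exists_index_lt hv hw hvw
  obtain ⟨U, hU, n, hpath⟩ := hxy.exists_isPathOn
  have hpath := hpath.symm.cons hwy fun h => (hU h).2 hw
  have hpath := hpath.symm.cons hvx <| by
    rintro (h | h)
    exacts [hvw h, (hU h).2 hv]
  have := hC.five_le
  refine hC.no_ear hij hj hpath (Set.disjoint_right.2 ?_) ?_ (by omega) (by omega)
  · rintro z (rfl | rfl | hz) hzT
    exacts [hC.disjoint.le_bot ⟨hzT, hv⟩, hC.disjoint.le_bot ⟨hzT, hw⟩, (hU hz).1 hzT]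
  · rintro z ⟨rfl | rfl | hz, hzf⟩
    exacts [.inl rfl, .inr rfl, ((hU hz).2 hzf).elim]

theorem eq_of_reachableIn_outside [Finite V] (hC : OffCycle G T f L)
    (hz : z ∈ outside T (Set.range f)) (hv : v ∈ Set.range f) (hw : w ∈ Set.range f)
    (hzv : ReachableIn G (insert v (outside T (Set.range f))) z v)
    (hzw : ReachableIn G (insert w (outside T (Set.range f))) z w) : v = w := by
  obtain ⟨x, hvx, hzx⟩ := hzv.exists_adj_last fun h => hz.2 (h ▸ hv)
  obtain ⟨y, hwy, hzy⟩ := hzw.exists_adj_last fun h => hz.2 (h ▸ hw)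
  exact hC.eq_of_adj_outside hv hw hvx hwy (hzx.symm.trans hzy)

theorem exists_leg_of_reachableIn (hC : OffCycle G T f L) (ht : t ∈ T) (hv : v ∈ Set.range f)
    (h : ReachableIn G (insert t (insert v (outside T (Set.range f)))) t v) :
    ∃ P n, IsLeg G T (Set.range f) P t v n := by
  obtain ⟨P, hP, n, hpath⟩ := h.exists_isPathOn
  refine ⟨P, n, hpath, ht, hv, fun z hz => ?_, fun z hz => ?_⟩
  · rcases hP hz.1 with h | rfl | h
    exacts [h, (hC.disjoint.le_bot ⟨hz.2, hv⟩).elim, (h.1 hz.2).elim]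
  · rcases hP hz.1 with rfl | h | h
    exacts [(hC.disjoint.le_bot ⟨ht, hz.2⟩).elim, h, (h.2 hz.2).elim]

section Legs

variable [Finite V]

theorem leg_inter (hC : OffCycle G T f L) (hP : IsLeg G T (Set.range f) P s v m)
    (hQ : IsLeg G T (Set.range f) Q t w n) (hvw : v ≠ w) (hzP : z ∈ P) (hzQ : z ∈ Q) :
    z = s ∧ z = t := by
  by_cases hzT : z ∈ T
  · exact ⟨hP.inter_T ⟨hzP, hzT⟩, hQ.inter_T ⟨hzQ, hzT⟩⟩
  by_cases hzf : z ∈ Set.range f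
  · exact (hvw ((hP.inter_C ⟨hzP, hzf⟩).symm.trans (hQ.inter_C ⟨hzQ, hzf⟩))).elim
  exact (hvw (hC.eq_of_reachableIn_outside ⟨hzT, hzf⟩ hP.tip_mem hQ.tip_mem
    (hP.reachableIn_outside hzP hzT) (hQ.reachableIn_outside hzQ hzT))).elim

theorem leg_relation (hC : OffCycle G T f L) (hij : i < j) (hj : j < i + L)
    (hP : IsLeg G T (Set.range f) P s (f i) m) (hQ : IsLeg G T (Set.range f) Q t (f j) n) :
    (s ≠ t → (m + n) % 2 = 0 ∧ (m + n + (j - i)) % 4 ≤ 1) ∧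
      (s = t → (m + n) % 2 = 0 → 2 ≤ (m + n + (j - i)) % 4) := by
  have hinter := fun z => hC.leg_inter (z := z) hP hQ (hC.injective i j hij hj)
  have hL := hC.length_mod_four
  constructor
  · intro hst
    have := hC.leg_mod_four hC.noFour hC.isNClique hC.disjoint hij hj hst hP hQ <|
      Set.disjoint_left.2 fun z hzP hzQ =>
        hst ((hinter z hzP hzQ).1.symm.trans (hinter z hzP hzQ).2)
    omega
  · rintro rfl heven
    obtain ⟨A, hA, hpA⟩ := hC.exists_arc hij hj
    obtain ⟨B, hB, hpB⟩ := hC.exists_complementary_arc hij hj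
    have := hP.pos hC.disjoint
    have := hQ.pos hC.disjoint
    have h₁ := hP.not_dvd_of_same_foot hQ hC.noFour hC.disjoint
      (fun z h h' => .inl (hinter z h h').1) hpA hA (by omega)
    have h₂ := hP.not_dvd_of_same_foot hQ hC.noFour hC.disjoint
      (fun z h h' => .inl (hinter z h h').1) hpB hB (by omega)
    omega

/-- The congruence `q ≡ p` between the gaps that `P` and `P'` would need contradicts the leg `R`. -/
theorem eq_foot_of_other_legs (hC : OffCycle G T f L) (hP : IsLeg G T (Set.range f) P s v m)
    (hP' : IsLeg G T (Set.range f) W t v n) (hQ : IsLeg G T (Set.range f) Q r w k)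
    (hR : IsLeg G T (Set.range f) R s x l) (hvw : v ≠ w) (hvx : v ≠ x) (hrs : r ≠ s)
    (hrt : r ≠ t) : s = t := by
  by_contra hst
  obtain ⟨i, j, hij, hj, rfl, rfl⟩ := hC.exists_index_lt hP.tip_mem hQ.tip_mem hvw
  have h₁ := (hC.leg_relation hij hj hP hQ).1 hrs.symm
  have h₂ := (hC.leg_relation hij hj hP' hQ).1 hrt.symm
  have hmn : m % 4 = n % 4 := by omega
  obtain ⟨i', j', hij, hj, hi', rfl⟩ := hC.exists_index_lt hP.tip_mem hR.tip_mem hvx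
  have h₃ := (hC.leg_relation hij hj (hi' ▸ hP) hR).2 rfl
  have h₄ := (hC.leg_relation hij hj (hi' ▸ hP') hR).1 (Ne.symm hst)
  have : 2 ≤ (m + l + (j' - i')) % 4 := h₃ (by omega)
  omega

theorem exists_legs_injOn (hC : OffCycle G T f L) :
    ∃ (P : V → Set V) (v : V → V) (n : V → ℕ),
      (∀ t ∈ T, IsLeg G T (Set.range f) (P t) t (v t) (n t)) ∧ Set.InjOn v T := by
  obtain ⟨P, v, n, hleg, hdisj⟩ := hC.insep.exists_disjoint_legs hC.isNClique.card_eq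
    hC.toObstruction.robust hC.robust_range
  refine ⟨P, v, n, hleg, fun s hs t ht heq => by_contra fun hst => ?_⟩
  exact (hdisj s hs t ht hst).le_bot ⟨(hleg s hs).isPathOn.right_mem,
    heq ▸ (hleg t ht).isPathOn.right_mem⟩

theorem eq_foot (hC : OffCycle G T f L) (hP : IsLeg G T (Set.range f) P s v m)
    (hQ : IsLeg G T (Set.range f) Q t v n) : s = t := by
  by_contra hst
  have hs := hP.foot_mem
  have ht := hQ.foot_mem
  obtain ⟨R, u, k, hR, hu⟩ := hC.exists_legs_injOn
  obtain ⟨r, hr, hrs, hrt⟩ := exists_mem_ne hC.isNClique.card_eq s t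
  by_cases hur : u r = v
  · subst hur
    exact hrs (hC.eq_foot_of_other_legs hP (hR r hr) (hR t ht) (hR s hs)
      (fun h => hrt (hu hr ht h)) (fun h => hrs (hu hr hs h)) (Ne.symm hst) hrt.symm).symm
  · by_cases hus : u s = v
    · have hut : v ≠ u t := fun h => hst (hu hs ht (hus.trans h))
      exact hst (hC.eq_foot_of_other_legs hQ hP (hR r hr) (hR t ht) (Ne.symm hur) hut hrt hrs).symm
    · exact hst (hC.eq_foot_of_other_legs hP hQ (hR r hr) (hR s hs) (Ne.symm hur) (Ne.symm hus)
        hrs hrt)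

/-- Two consecutive inner vertices of a long leg would be cut off from the cycle by the ends of the
leg. -/
theorem leg_length_le_two (hC : OffCycle G T f L) (hP : IsLeg G T (Set.range f) P t v n) :
    n ≤ 2 := by
  by_contra hn
  obtain ⟨k, rfl⟩ := Nat.exists_eq_add_of_le' (not_le.1 hn)
  obtain ⟨p, -, hp⟩ := hP.isPathOn.uncons
  obtain ⟨q, hpq, hq⟩ := hp.uncons
  obtain ⟨x, -, hx⟩ := hq.uncons
  obtain ⟨hpP, hpt⟩ := hp.left_mem
  obtain ⟨⟨-, hqt⟩, -⟩ := hq.left_mem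
  obtain ⟨⟨-, hvp⟩, hvq⟩ := hx.right_mem
  have hpT : p ∉ T := fun h => hpt (hP.inter_T ⟨hpP, h⟩)
  have hpf : p ∉ Set.range f := fun h => hvp (hP.inter_C ⟨hpP, h⟩).symm
  have hft : ∀ i, f i ≠ t := fun i h => hC.disjoint.le_bot ⟨hP.foot_mem, i, h⟩
  obtain ⟨i, rfl⟩ := hP.tip_mem
  have := hC.five_le
  have hreach := hC.insep {f i, t} (ncard_pair_le_two _ _) p q (f (i + 2)) (f (i + 3)) hpq
    (hC.adj _) (by simpa [Ne.symm hvp] using hpt) (by simpa [Ne.symm hvq] using hqt)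
    (by simpa [hft] using (hC.injective i (i + 2) (by omega) (by omega)).symm)
    (by simpa [hft] using (hC.injective i (i + 3) (by omega) (by omega)).symm)
  obtain ⟨w, hw, hwS, hpw⟩ := hreach.exists_first_hit (X := {z | z ∈ T ∨ z ∈ Set.range f})
    (.inr ⟨_, rfl⟩)
  simp only [Set.mem_compl_iff, Set.mem_insert_iff, Set.mem_singleton_iff, not_or] at hwS
  have hpw : ReachableIn G (insert w (outside T (Set.range f))) p w :=
    hpw.mono (Set.insert_subset_insert fun z hz => not_or.1 hz.right_mem.2)
  have hpv := hP.reachableIn_outside hpP hpT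
  rcases hw with hw | hw
  · obtain ⟨Q, l, hQ⟩ := hC.exists_leg_of_reachableIn hw hP.tip_mem <|
      (hpw.symm.mono (Set.insert_subset_insert (Set.subset_insert _ _))).trans
        (hpv.mono (Set.subset_insert _ _))
    exact hwS.2 (hC.eq_foot hQ hP)
  · exact hwS.1 (hC.eq_of_reachableIn_outside ⟨hpT, hpf⟩ hw hP.tip_mem hpw hpv)

theorem exists_leg_length (hC : OffCycle G T f L) : ∃ m, (m = 1 ∨ m = 2) ∧
    ∀ P s v n, IsLeg G T (Set.range f) P s v n → n = m := by
  obtain ⟨R, u, k, hR, hu⟩ := hC.exists_legs_injOn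
  have heq : ∀ {P Q s t v w m n}, IsLeg G T (Set.range f) P s v m →
      IsLeg G T (Set.range f) Q t w n → s ≠ t → v ≠ w → m = n := by
    intro P Q s t v w m n hP hQ hst hvw
    obtain ⟨i, j, hij, hj, rfl, rfl⟩ := hC.exists_index_lt hP.tip_mem hQ.tip_mem hvw
    have := (hC.leg_relation hij hj hP hQ).1 hst
    have := hP.pos hC.disjoint
    have := hQ.pos hC.disjoint
    have := hC.leg_length_le_two hP
    have := hC.leg_length_le_two hQ
    omega
  obtain ⟨r, hr, -⟩ := exists_mem_ne hC.isNClique.card_eq (f 0) (f 0)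
  have hRr : ∀ t ∈ T, k t = k r := fun t ht => by
    by_cases htr : t = r
    · rw [htr]
    · exact heq (hR t ht) (hR r hr) htr fun h => htr (hu ht hr h)
  have := (hR r hr).pos hC.disjoint
  have := hC.leg_length_le_two (hR r hr)
  refine ⟨k r, by omega, fun P s v n hP => ?_⟩
  obtain ⟨t, ht, hts, -⟩ := exists_mem_ne hC.isNClique.card_eq s s
  obtain ⟨x, hx, hxs, hxt⟩ := exists_mem_ne hC.isNClique.card_eq s t
  by_cases htv : v = u t
  · have hxv : v ≠ u x := fun h => hxt (hu hx ht (h.symm.trans htv))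
    exact (heq hP (hR x hx) hxs.symm hxv).trans (hRr x hx)
  · exact (heq hP (hR t ht) hts.symm htv).trans (hRr t ht)

theorem reachableIn_of_adj (hC : OffCycle G T f L) (hv : v ∈ Set.range f)
    (hxv : ReachableIn G (insert v (outside T (Set.range f))) x v) (hxy : G.Adj x y)
    (hleg : ∀ P n, ¬ IsLeg G T (Set.range f) P y v n) (hx : x = v → y ∉ Set.range f) :
    ReachableIn G (insert v (outside T (Set.range f))) y v := by
  by_cases hyT : y ∈ T
  · obtain ⟨P, n, hP⟩ := hC.exists_leg_of_reachableIn hyT hv <|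
      (hxv.mono (Set.subset_insert _ _)).cons hxy.symm (Set.mem_insert _ _)
    exact (hleg P n hP).elim
  by_cases hyf : y ∈ Set.range f
  · rcases hxv.left_mem with rfl | hxO
    · exact (hx rfl hyf).elim
    · rw [← hC.eq_of_reachableIn_outside hxO hv hyf hxv
        (.of_adj hxy (.inr hxO) (Set.mem_insert _ _))]
      exact .refl (Set.mem_insert _ _)
  · exact hxv.cons hxy.symm (.inr ⟨hyT, hyf⟩)

theorem exists_leg_at_succ (hC : OffCycle G T f L) (i : ℕ) :
    ∃ P s n, IsLeg G T (Set.range f) P s (f (i + 1)) n ∨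
      IsLeg G T (Set.range f) P s (f (i + 2)) n := by
  by_contra! hcon
  have := hC.five_le
  have hfT : ∀ t ∈ T, ∀ i, f i ≠ t := fun t ht i h => hC.disjoint.le_bot ⟨ht, i, h⟩
  have hne : ∀ {a b}, i ≤ a → a < b → b < i + 5 → f a ≠ f b := fun h hab hb =>
    hC.injective _ _ hab (by omega)
  obtain ⟨s, hs, -⟩ := exists_mem_ne hC.isNClique.card_eq (f 0) (f 0)
  obtain ⟨t, ht, hts, -⟩ := exists_mem_ne hC.isNClique.card_eq s s
  have hreach := hC.insep {f i, f (i + 3)} (ncard_pair_le_two _ _) (f (i + 1)) (f (i + 2)) s t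
    (hC.adj _) (hC.isNClique.isClique hs ht hts.symm)
    (by simpa using ⟨(hne le_rfl (by omega) (by omega)).symm, hne (by omega) (by omega) (by omega)⟩)
    (by simpa using ⟨(hne le_rfl (by omega) (by omega)).symm, hne (by omega) (by omega) (by omega)⟩)
    (by simpa using ⟨(hfT s hs _).symm, (hfT s hs _).symm⟩)
    (by simpa using ⟨(hfT t ht _).symm, (hfT t ht _).symm⟩)
  have key : s ∈ {q | ReachableIn G (insert (f (i + 1)) (outside T (Set.range f))) q (f (i + 1)) ∨
      ReachableIn G (insert (f (i + 2)) (outside T (Set.range f))) q (f (i + 2))} := by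
    refine hreach.mem_of_closed (.inl (.refl (by simp))) fun q hq b hb hqb => ?_
    simp only [Set.mem_compl_iff, Set.mem_insert_iff, Set.mem_singleton_iff, not_or] at hb
    rcases hq with hq | hq
    · by_cases h : q = f (i + 1) ∧ b ∈ Set.range f
      · obtain rfl := (hC.no_chord h.2 (h.1 ▸ hqb)).resolve_left hb.1
        exact .inr (.refl (by simp))
      · exact .inl (hC.reachableIn_of_adj ⟨_, rfl⟩ hq hqb (fun P n => (hcon P b n).1)
          (not_and.1 h))
    · by_cases h : q = f (i + 2) ∧ b ∈ Set.range f
      · obtain rfl := (hC.no_chord h.2 (h.1 ▸ hqb)).resolve_right hb.2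
        exact .inl (.refl (by simp))
      · exact .inr (hC.reachableIn_of_adj ⟨_, rfl⟩ hq hqb (fun P n => (hcon P b n).2)
          (not_and.1 h))
  rcases key with h | h <;> rcases h.left_mem with h | h
  exacts [hfT s hs _ h.symm, h.1 hs, hfT s hs _ h.symm, h.1 hs]

end Legs

end OffCycle

/-- If the labels of a sequence occur at one of any two consecutive places, and the equality of the
labels at two places is determined modulo 4 by the distance of the places, then no three labels are
distinct. -/
theorem not_three_labels {α : Type*} {H : ℕ → α → Prop} {a b c : α} (hm : m = 1 ∨ m = 2)
    (hdense : ∀ i, ∃ s, H (i + 1) s ∨ H (i + 2) s)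
    (hrel : ∀ i j s t, i < j → j < i + L → H i s → H j t →
      (s = t ↔ 2 ≤ (m + m + (j - i)) % 4))
    (hij : i < j) (hjk : j < k) (hk : k < i + L) (ha : H i a) (hb : H j b) (hc : H k c)
    (hab : a ≠ b) (hbc : b ≠ c) (hac : a ≠ c) : False := by
  have h₁ := (hrel i j a b hij (by omega) ha hb).not.1 hab
  have h₂ := (hrel j k b c hjk (by omega) hb hc).not.1 hbc
  have h₃ := (hrel i k a c (by omega) hk ha hc).not.1 hac
  rcases hm with rfl | rfl
  · obtain ⟨d, rfl⟩ := Nat.exists_eq_add_of_le' (show 3 ≤ j by omega)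
    obtain ⟨s, hs | hs⟩ := hdense d
    · have has := hrel _ _ _ _ (by omega) (by omega) ha hs
      have hsc := hrel _ _ _ _ (by omega) (by omega) hs hc
      exact hac ((has.2 (by omega)).trans (hsc.2 (by omega)))
    · have hsb := hrel _ _ _ _ (by omega) (by omega) hs hb
      have hsc := hrel _ _ _ _ (by omega) (by omega) hs hc
      exact hbc ((hsb.2 (by omega)).symm.trans (hsc.2 (by omega)))
  · obtain ⟨p, q, x, y, hpq, hq, hx, hy, hxy, hmod⟩ : ∃ p q x y, p < q ∧ q < p + L ∧ H p x ∧
        H q y ∧ x ≠ y ∧ (q - p) % 4 = 0 := by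
      obtain h | h : (j - i) % 4 = 0 ∨ (k - j) % 4 = 0 := by omega
      exacts [⟨i, j, a, b, hij, by omega, ha, hb, hab, h⟩,
        ⟨j, k, b, c, hjk, by omega, hb, hc, hbc, h⟩]
    have h2 : ∀ r, ¬ H (p + 2) r := fun r hr =>
      hxy (((hrel _ _ _ _ (by omega) (by omega) hx hr).2 (by omega)).trans
        ((hrel _ _ _ _ (by omega) (by omega) hr hy).2 (by omega)))
    obtain ⟨r, hr⟩ := hdense p
    have hr := hr.resolve_right (h2 r)
    obtain ⟨s, hs⟩ := hdense (p + 1)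
    have hs := hs.resolve_left (h2 s)
    have hry := (hrel _ _ _ _ (by omega) (by omega) hr hy).2 (by omega)
    have hxs := (hrel _ _ _ _ (by omega) (by omega) hx hs).2 (by omega)
    have hrs := (hrel _ _ _ _ (by omega) (by omega) hr hs).2 (by omega)
    exact hxy (hxs.trans (hrs.symm.trans hry))

theorem OffCycle.false [Finite V] (hC : OffCycle G T f L) : False := by
  obtain ⟨m, hm, hlen⟩ := hC.exists_leg_length
  obtain ⟨P, ι, n, hleg, -, r, hr, s, hs, t, ht, hrs, hst, htr⟩ := hC.exists_sorted_legs hC.insep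
    hC.isNClique.card_eq hC.toObstruction.robust hC.robust_range
  have hne : ∀ {x y}, ι x < ι y → x ≠ y := fun h h' => h.ne (congrArg ι h')
  refine not_three_labels (H := fun i s => ∃ P n, IsLeg G T (Set.range f) P s (f i) n) hm
    (fun i => ?_) (fun i j s t hij hj => ?_) hrs hst htr ⟨_, _, hleg r hr⟩ ⟨_, _, hleg s hs⟩
    ⟨_, _, hleg t ht⟩ (hne hrs) (hne hst) (hne (hrs.trans hst))
  · obtain ⟨P, s, n, h | h⟩ := hC.exists_leg_at_succ i
    exacts [⟨s, .inl ⟨P, n, h⟩⟩, ⟨s, .inr ⟨P, n, h⟩⟩]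
  · rintro ⟨P, a, hP⟩ ⟨Q, b, hQ⟩
    obtain rfl := hlen _ _ _ _ hP
    obtain rfl := hlen _ _ _ _ hQ
    obtain ⟨hdiff, hsame⟩ := hC.leg_relation hij hj hP hQ
    refine ⟨fun h => hsame h (by omega), fun h => by_contra fun h' => ?_⟩
    have := hdiff h'
    omega

theorem ReducedObstruction.exists_mem_support [Finite V] (hO : ReducedObstruction G T) {u : V}
    {c : G.Walk u u} (hc : c.IsCycle) : ∃ t ∈ T, t ∈ c.support := by
  by_contra! h
  obtain ⟨f, hf, hfc⟩ := exists_isCycleSeq_of_isCycle hc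
  exact OffCycle.false ⟨hO, hf, Set.disjoint_right.2 fun z ⟨i, hi⟩ hz => h z hz (hi ▸ hfc i)⟩

end CyclesOffTriangle

section Leaves

variable {V : Type*} {G : SimpleGraph V} {T : Finset V} {U W S : Set V} {c d m u x y s t : V}
  {k n : ℕ}

/-- A vertex `u` off the triangle `T` whose only neighbours are `m ∉ T` and `t ∈ T`, which are
called its base and its letter. -/
structure IsLeaf (G : SimpleGraph V) (T : Finset V) (m t u : V) : Prop where
  base_notMem : m ∉ T
  letter_mem : t ∈ T
  notMem : u ∉ T
  adj_base : G.Adj u m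
  adj_letter : G.Adj u t
  eq_or_eq : ∀ q, G.Adj u q → q = m ∨ q = t

/-- The vertex `m` is the base of leaves with all letters except possibly `c`. -/
def HasFork (G : SimpleGraph V) (T : Finset V) (m c : V) : Prop :=
  ∀ t ∈ T, t ≠ c → ∃ u, IsLeaf G T m t u

namespace ReducedObstruction

theorem not_two_paths [Finite V] (hO : ReducedObstruction G T) (hU : IsPathOn G U x y k)
    (hW : IsPathOn G W x y n) (hUW : U ∩ W ⊆ {x, y}) (hxy : x ≠ y) (hkn : 3 ≤ k + n)
    (hUT : Disjoint (T : Set V) U) (hWT : Disjoint (T : Set V) W) : False := by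
  obtain ⟨c, hc, -, hsupp⟩ := hU.exists_isCycle hW hUW hxy hkn
  obtain ⟨t, ht, htc⟩ := hO.exists_mem_support hc
  exact (hUT.union_right hWT).le_bot ⟨ht, hsupp t htc⟩

end ReducedObstruction

namespace Obstruction

theorem mod_four_of_adj_ends (hO : Obstruction G T) (hU : IsPathOn G U x y k)
    (hUT : Disjoint (T : Set V) U) (hs : s ∈ T) (ht : t ∈ T) (hst : s ≠ t) (hsx : G.Adj s x)
    (hty : G.Adj t y) : (k + 2) % 4 ≤ 1 := by
  have hpath := hU.symm.cons hty fun h => hUT.le_bot ⟨ht, h⟩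
  have hpath := hpath.symm.cons hsx fun h => h.elim hst fun h => hUT.le_bot ⟨hs, h⟩
  refine hO.noFour.mod_four_le_one_of_isNClique hO.isNClique hpath hs ht hst ?_
  rintro z ⟨rfl | rfl | hz, hzT⟩
  exacts [.inl rfl, .inr rfl, (hUT.le_bot ⟨hzT, hz⟩).elim]

theorem not_dvd_of_adj_ends (hO : Obstruction G T) (hU : IsPathOn G U x y k)
    (hUT : Disjoint (T : Set V) U) (hxy : x ≠ y) (hs : s ∈ T) (hsx : G.Adj s x)
    (hsy : G.Adj s y) : ¬ 4 ∣ k + 2 := by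
  have hsU : s ∉ U := fun h => hUT.le_bot ⟨hs, h⟩
  have hk := hU.pos hxy
  exact hO.noFour.not_dvd_add hU ((IsPathOn.of_adj hsy).cons hsx.symm (by grind [hsx.ne']))
    (by rintro z ⟨hz, rfl | rfl | rfl⟩ <;> simp_all) hxy (by omega)

theorem eq_of_adj_mem (hO : Obstruction G T) (hx : x ∉ T) (hs : s ∈ T) (ht : t ∈ T)
    (hxs : G.Adj x s) (hxt : G.Adj x t) : s = t := by
  by_contra hst
  have := hO.mod_four_of_adj_ends (IsPathOn.nil x) (by simpa using hx) hs ht hst hxs.symm hxt.symm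
  omega

theorem eq_of_adj_adj_mem (hO : Obstruction G T) (hx : x ∉ T) (hy : y ∉ T) (hxy : G.Adj x y)
    (hs : s ∈ T) (ht : t ∈ T) (hxs : G.Adj x s) (hyt : G.Adj y t) : s = t := by
  by_contra hst
  have := hO.mod_four_of_adj_ends (IsPathOn.of_adj hxy)
    (Set.disjoint_right.2 (by rintro z (rfl | rfl) <;> assumption)) hs ht hst hxs.symm hyt.symm
  omega

theorem exists_adj_notMem (hO : Obstruction G T) (hx : x ∉ T) (hxy : G.Adj x y) :
    ∃ z ∉ T, G.Adj x z := by
  by_contra! h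
  obtain ⟨z, hzy, hxz⟩ := hO.exists_adj_ne x y hxy
  have hmem : ∀ q, G.Adj x q → q ∈ T := fun q hq => by_contra fun hqT => h q hqT hq
  exact hzy (hO.eq_of_adj_mem hx (hmem z hxz) (hmem y hxy) hxz hxy)

/-- A set `S` of two vertices cannot cut off `m` together with the leaves at `m`. -/
theorem exists_leaf_letter_notMem (hO : Obstruction G T) (hS : S.ncard ≤ 2) (hm : m ∉ S)
    (hu : IsLeaf G T m t u) (huS : u ∉ S)
    (hN : ∀ q, G.Adj m q → q ∉ T → q ∉ S → ∃ s, IsLeaf G T m s q)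
    (hs : s ∈ T) (hsS : s ∉ S) (hsd : G.Adj s d) (hd : d ∉ S) :
    ∃ q ∈ T, q ∉ S ∧ ∃ v, IsLeaf G T m q v := by
  by_contra! hcon
  have hmT : ∀ q, G.Adj m q → q ∉ S → q ∉ T := fun q hmq hqS hqT => by
    obtain rfl := hO.eq_of_adj_adj_mem hu.notMem hu.base_notMem hu.adj_base hu.letter_mem hqT
      hu.adj_letter hmq
    exact hcon t hqT hqS u hu
  have key : s ∈ {q | q = m ∨ ∃ t, IsLeaf G T m t q} := by
    refine (hO.insep S hS m u s d hu.adj_base.symm hsd hm huS hsS hd).mem_of_closed (.inl rfl) ?_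
    rintro p (rfl | ⟨r, hp⟩) q hq hpq
    · exact .inr (hN q hpq (hmT q hpq hq) hq)
    · rcases hp.eq_or_eq q hpq with rfl | rfl
      exacts [.inl rfl, (hcon q hp.letter_mem hq p hp).elim]
  rcases key with rfl | ⟨r, hr⟩
  exacts [hu.base_notMem hs, hr.notMem hs]

end Obstruction

namespace IsLeaf

theorem eq_base (hu : IsLeaf G T m t u) (hq : G.Adj u x) (hx : x ∉ T) : x = m :=
  (hu.eq_or_eq x hq).resolve_right fun h => hx (h ▸ hu.letter_mem)

theorem eq_letter (hu : IsLeaf G T m t u) (hq : G.Adj u x) (hx : x ∈ T) : x = t :=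
  (hu.eq_or_eq x hq).resolve_left fun h => hu.base_notMem (h ▸ hx)

theorem notMem_of_isPathOn (hu : IsLeaf G T m t u) (hU : IsPathOn G U x y n)
    (hUT : Disjoint (T : Set V) U) (hux : u ≠ x) (huy : u ≠ y) : u ∉ U := fun h => by
  obtain ⟨U₁, U₂, i, j, -, rfl, hinter, h₁, h₂⟩ := hU.split h
  have hbase : ∀ {W y n}, IsPathOn G W u y n → u ≠ y → Disjoint (T : Set V) W → m ∈ W := by
    intro W y n hW huy hWT
    obtain ⟨k, rfl⟩ := Nat.exists_eq_succ_of_ne_zero (hW.pos huy).ne'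
    obtain ⟨q, huq, hq⟩ := hW.uncons
    have hqW := hq.left_mem.1
    exact hu.eq_base huq (fun h => hWT.le_bot ⟨h, hqW⟩) ▸ hqW
  obtain rfl : m = u := hinter.subset ⟨hbase h₁.symm hux (hUT.mono_right Set.subset_union_left),
    hbase h₂ huy (hUT.mono_right Set.subset_union_right)⟩
  exact hu.adj_base.ne rfl

end IsLeaf

end Leaves

section LongestPaths

variable {V : Type*} {G : SimpleGraph V} {T : Finset V} {U W : Set V}
  {a b c m m' p q u v x y s t : V} {k n : ℕ}

/-- The edge `x m` followed by a path on `W` of length `n` from `m` to `y` is a longest path among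
the paths off `T` in its component of `G - T`. -/
structure IsLongestOff (G : SimpleGraph V) (T : Finset V) (W : Set V) (x m y : V) (n : ℕ) :
    Prop where
  adj : G.Adj x m
  tail : IsPathOn G W m y n
  notMem_tail : x ∉ W
  notMem : x ∉ T
  disjoint : Disjoint (T : Set V) W
  le : ∀ {U : Set V} {a b : V} {k : ℕ}, IsPathOn G U a b k → Disjoint (T : Set V) U →
    ReachableIn G (T : Set V)ᶜ m a → k ≤ n + 1

theorem IsPathOn.length_lt [Finite V] (h : IsPathOn G U x y n) : n < Nat.card V := by
  have := Fintype.ofFinite V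
  obtain ⟨p, hp, rfl, -⟩ := h
  simpa [Nat.card_eq_fintype_card] using hp.length_lt

namespace ReducedObstruction

variable [Finite V]

theorem eq_of_adj_of_mem_path (hO : ReducedObstruction G T) (hU : IsPathOn G U x y n)
    (hUT : Disjoint (T : Set V) U) (hp : p ∈ U) (hq : q ∈ U) (hxp : G.Adj x p)
    (hxq : G.Adj x q) : p = q := by
  cases n with
  | zero =>
    rw [hU.eq_of_zero.2, Set.mem_singleton_iff] at hp
    exact (hxp.ne hp.symm).elim
  | succ n =>
    obtain ⟨w, hxw, hW⟩ := hU.uncons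
    have second : ∀ r ∈ U, G.Adj x r → r = w := by
      intro r hr hxr
      by_contra hrw
      obtain ⟨U₁, U₂, i, j, -, hunion, -, h₁, -⟩ := hW.split (z := r) ⟨hr, hxr.ne'⟩
      have hsub : U₁ ⊆ U \ {x} := hunion ▸ Set.subset_union_left
      have hi := h₁.pos (Ne.symm hrw)
      have hsubU : insert x U₁ ⊆ U :=
        Set.insert_subset hU.left_mem (hsub.trans Set.sdiff_subset)
      exact hO.not_two_paths (h₁.cons hxw fun h => (hsub h).2 rfl) (.of_adj hxr)
        Set.inter_subset_right hxr.ne (by omega) (hUT.mono_right hsubU)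
        (hUT.mono_right (Set.pair_subset hU.left_mem hr))
    rw [second p hp hxp, second q hq hxq]

theorem exists_isLongestOff (hO : ReducedObstruction G T) (hx : x ∉ T) (hxy : G.Adj x y) :
    ∃ W a m b n, IsLongestOff G T W a m b n ∧ ReachableIn G (T : Set V)ᶜ x m := by
  obtain ⟨z, hz, hxz⟩ := hO.exists_adj_notMem hx hxy
  let lengths : Set ℕ := {k | ∃ U a b, IsPathOn G U a b k ∧ Disjoint (T : Set V) U ∧
    ReachableIn G (T : Set V)ᶜ x a}
  have hbdd : BddAbove lengths := ⟨Nat.card V, fun k ⟨_, _, _, hU, _⟩ => hU.length_lt.le⟩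
  have hone : 1 ∈ lengths := ⟨{x, z}, x, z, .of_adj hxz,
    Set.disjoint_right.2 (by rintro q (rfl | rfl) <;> assumption), .refl hx⟩
  obtain ⟨U, a, b, hU, hUT, hxa⟩ := Nat.sSup_mem ⟨1, hone⟩ hbdd
  obtain ⟨n, hn⟩ := Nat.exists_eq_add_of_le' (le_csSup hbdd hone)
  rw [hn] at hU
  obtain ⟨m, ham, hm⟩ := hU.uncons
  have hxm := hxa.trans (.of_adj ham hxa.right_mem fun h => hUT.le_bot ⟨h, hm.left_mem.1⟩)
  exact ⟨U \ {a}, a, m, b, n, ⟨ham, hm, fun h => h.2 rfl, hxa.right_mem,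
    hUT.mono_right Set.sdiff_subset, fun h hT hr =>
      hn ▸ le_csSup hbdd ⟨_, _, _, h, hT, hxm.trans hr⟩⟩, hxm⟩

end ReducedObstruction

namespace IsLongestOff

theorem base_notMem (hL : IsLongestOff G T W x m y n) : m ∉ T := fun h =>
  hL.disjoint.le_bot ⟨h, hL.tail.left_mem⟩

theorem disjoint_insert (hL : IsLongestOff G T W x m y n) :
    Disjoint (T : Set V) (insert x W) :=
  Set.disjoint_insert_right.2 ⟨hL.notMem, hL.disjoint⟩

theorem replace (hL : IsLongestOff G T W x m y n) (hmq : G.Adj m q) (hq : q ∉ W) (hqT : q ∉ T) :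
    IsLongestOff G T W q m y n :=
  ⟨hmq.symm, hL.tail, hq, hqT, hL.disjoint, hL.le⟩

theorem exists_reverse (hL : IsLongestOff G T W x m y n) :
    ∃ W' m', IsLongestOff G T W' y m' x n ∧
      ReachableIn G (T : Set V)ᶜ m m' := by
  have hpath := hL.tail.cons hL.adj hL.notMem_tail
  obtain ⟨m', hym', hm'⟩ := hpath.symm.uncons
  have hreach : ReachableIn G (T : Set V)ᶜ m m' := by
    have hsub : insert x W ⊆ (T : Set V)ᶜ := fun q hq hqT => hL.disjoint_insert.le_bot ⟨hqT, hq⟩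
    exact (hL.tail.reachableIn.mono (subset_trans (Set.subset_insert x W) hsub)).trans
      (.of_adj hym' (hsub hpath.right_mem) (hsub hm'.left_mem.1))
  exact ⟨_, m', ⟨hym', hm', fun h => h.2 rfl,
    fun h => hL.disjoint.le_bot ⟨h, hL.tail.right_mem⟩,
    hL.disjoint_insert.mono_right Set.sdiff_subset, fun h hT hr => hL.le h hT (hreach.trans hr)⟩,
    hreach⟩

variable [Finite V]

theorem eq_of_adj (hL : IsLongestOff G T W x m y n) (hO : ReducedObstruction G T)
    (hxq : G.Adj x q) (hq : q ∉ T) : q = m := by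
  have hpath := hL.tail.cons hL.adj hL.notMem_tail
  by_cases hqU : q ∈ insert x W
  · exact hO.eq_of_adj_of_mem_path hpath hL.disjoint_insert hqU (.inr hL.tail.left_mem) hxq hL.adj
  · have := hL.le (hpath.cons hxq.symm hqU) (Set.disjoint_insert_right.2 ⟨hq, hL.disjoint_insert⟩)
      ((ReachableIn.of_adj hL.adj.symm hL.base_notMem hL.notMem).trans
        (.of_adj hxq hL.notMem hq))
    omega

theorem exists_isLeaf (hL : IsLongestOff G T W x m y n) (hO : ReducedObstruction G T) :
    ∃ t, IsLeaf G T m t x := by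
  obtain ⟨t, htm, hxt⟩ := hO.exists_adj_ne x m hL.adj
  have ht : t ∈ T := by_contra fun ht => htm (hL.eq_of_adj hO hxt ht)
  refine ⟨t, hL.base_notMem, ht, hL.notMem, hL.adj, hxt, fun q hxq => ?_⟩
  by_cases hq : q ∈ T
  exacts [.inr (hO.eq_of_adj_mem hL.notMem hq ht hxq hxt), .inl (hL.eq_of_adj hO hxq hq)]

theorem exists_isLeaf_of_adj (hL : IsLongestOff G T W x m y n) (hO : ReducedObstruction G T)
    (hmq : G.Adj m q) (hq : q ∉ T) (hqW : q ∉ W) : ∃ t, IsLeaf G T m t q :=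
  (hL.replace hmq hqW hq).exists_isLeaf hO

theorem exists_hasFork (hL : IsLongestOff G T W x m y n) (hO : ReducedObstruction G T) :
    ∃ c ∈ T, HasFork G T m c := by
  obtain ⟨t, hx⟩ := hL.exists_isLeaf hO
  have hT := hO.isNClique.card_eq
  obtain ⟨s, hs, hst, -⟩ := exists_mem_ne hT t t
  obtain ⟨d, hd, hdt, hds, -⟩ := exists_third_vertex hT hx.letter_mem hs hst.symm
  let S : Set V := insert t {q ∈ W | G.Adj m q}
  have hTS : ∀ r ∈ T, r ≠ t → r ∉ S := fun r hr hrt h =>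
    h.elim hrt fun h => hL.disjoint.le_bot ⟨hr, h.1⟩
  have hS : S.ncard ≤ 2 := by
    have hsub : {q ∈ W | G.Adj m q}.Subsingleton := fun p hp q hq =>
      hO.eq_of_adj_of_mem_path hL.tail hL.disjoint hp.1 hq.1 hp.2 hq.2
    exact (Set.ncard_insert_le _ _).trans
      (Nat.succ_le_succ (Set.ncard_le_one_iff_subsingleton.2 hsub))
  obtain ⟨q, hq, hqS, v, hv⟩ := hO.exists_leaf_letter_notMem hS (m := m)
    (fun h => h.elim (fun h => hx.base_notMem (h ▸ hx.letter_mem)) fun h => h.2.ne rfl) hx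
    (fun h => h.elim (fun h => hx.notMem (h ▸ hx.letter_mem)) fun h => hL.notMem_tail h.1)
    (fun q hmq hq hqS => hL.exists_isLeaf_of_adj hO hmq hq fun h => hqS (.inr ⟨h, hmq⟩))
    hs (hTS s hs hst) (hO.isNClique.isClique hs hd hds.symm) (hTS d hd hdt)
  have htq : t ≠ q := fun h => hqS (.inl h.symm)
  obtain ⟨c, hc, -, -, hcases⟩ := exists_third_vertex hT hx.letter_mem hq htq
  refine ⟨c, hc, fun r hr hrc => ?_⟩
  obtain rfl | rfl := (hcases r hr).imp_right fun h => h.resolve_right hrc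
  exacts [⟨x, hx⟩, ⟨v, hv⟩]

end IsLongestOff

namespace IsLeaf

theorem base_unique (hu : IsLeaf G T m s u) (hv : IsLeaf G T m' t u) : m = m' :=
  hv.eq_base hu.adj_base hu.base_notMem

theorem letter_unique (hu : IsLeaf G T m s u) (hv : IsLeaf G T m' t u) : s = t :=
  hv.eq_letter hu.adj_letter hu.letter_mem

theorem not_isLeaf_base (hu : IsLeaf G T m s u) (hv : IsLeaf G T m t v) (hst : s ≠ t) :
    ¬ IsLeaf G T m' q m := fun hm => by
  obtain rfl := hm.eq_base hu.adj_base.symm hu.notMem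
  obtain rfl := hm.eq_base hv.adj_base.symm hv.notMem
  exact hst (hu.letter_unique hv)

theorem isPathOn_letter (hu : IsLeaf G T m s u) (hv : IsLeaf G T m t v) (hst : s ≠ t) :
    IsPathOn G {s, u, m, v, t} s t 4 := by
  have huv : u ≠ v := by rintro rfl; exact hst (hu.letter_unique hv)
  have hmt : m ≠ t := fun h => hu.base_notMem (h ▸ hv.letter_mem)
  have hut : u ≠ t := fun h => hu.notMem (h ▸ hv.letter_mem)
  have hsm : s ≠ m := fun h => hu.base_notMem (h ▸ hu.letter_mem)
  have hsv : s ≠ v := fun h => hv.notMem (h ▸ hu.letter_mem)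
  exact ((((IsPathOn.of_adj hv.adj_letter).cons hv.adj_base.symm
    (by simp [hv.adj_base.ne', hmt])).cons hu.adj_base (by simp [hu.adj_base.ne, huv, hut])).cons
    hu.adj_letter.symm (by simp [hu.adj_letter.ne', hsm, hsv, hst]))

theorem isPathOn_base (hu : IsLeaf G T m s u) (hv : IsLeaf G T m' s v) (hmm' : m ≠ m')
    (hmv : m ≠ v) (hum' : u ≠ m') : IsPathOn G {m, u, s, v, m'} m m' 4 := by
  have huv : u ≠ v := by rintro rfl; exact hmm' (hu.base_unique hv)
  have hsm' : s ≠ m' := fun h => hv.base_notMem (h ▸ hv.letter_mem)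
  have hms : m ≠ s := fun h => hu.base_notMem (h ▸ hu.letter_mem)
  exact ((((IsPathOn.of_adj hv.adj_base).cons hv.adj_letter.symm
    (by simp [hv.adj_letter.ne', hsm'])).cons hu.adj_letter
    (by simp [hu.adj_letter.ne, huv, hum'])).cons hu.adj_base.symm
    (by simp [hu.adj_base.ne', hms, hmv, hmm']))

end IsLeaf

theorem Obstruction.eq_of_hasFork (hO : Obstruction G T) (hm : HasFork G T m c)
    (hm' : HasFork G T m' c) : m = m' := by
  by_contra hmm'
  have hT := hO.isNClique.card_eq
  obtain ⟨s, hs, hsc, -⟩ := exists_mem_ne hT c c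
  obtain ⟨t, ht, hts, htc⟩ := exists_mem_ne hT s c
  obtain ⟨⟨u₁, hu₁⟩, u₂, hu₂⟩ := hm s hs hsc, hm t ht htc
  obtain ⟨⟨v₁, hv₁⟩, v₂, hv₂⟩ := hm' s hs hsc, hm' t ht htc
  have hm_ne : ∀ {r v}, IsLeaf G T m' r v → m ≠ v := by
    rintro r v hv rfl; exact hu₁.not_isLeaf_base hu₂ hts.symm hv
  have hm'_ne : ∀ {r u}, IsLeaf G T m r u → u ≠ m' := by
    rintro r u hu rfl; exact hv₁.not_isLeaf_base hv₂ hts.symm hu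
  have leaf_ne : ∀ {r r' u v}, IsLeaf G T m r u → IsLeaf G T m' r' v → u ≠ v := by
    rintro r r' u v hu hv rfl; exact hmm' (hu.base_unique hv)
  have letter_ne : ∀ {m r u r'}, IsLeaf G T m r u → r' ∈ T → u ≠ r' := by
    rintro m r u r' hu hr' rfl; exact hu.notMem hr'
  have hu₁₂ : u₁ ≠ u₂ := by rintro rfl; exact hts.symm (hu₁.letter_unique hu₂)
  have hv₁₂ : v₁ ≠ v₂ := by rintro rfl; exact hts.symm (hv₁.letter_unique hv₂)
  refine hO.noFour.not_dvd_add (hu₁.isPathOn_base hv₁ hmm' (hm_ne hv₁) (hm'_ne hu₁))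
    (hu₂.isPathOn_base hv₂ hmm' (hm_ne hv₂) (hm'_ne hu₂)) ?_ hmm' (by omega) (by norm_num)
  have h₁ := leaf_ne hu₁ hv₂
  have h₂ := leaf_ne hu₂ hv₁
  have h₃ := letter_ne hu₁ ht
  have h₄ := letter_ne hu₂ hs
  have h₅ := letter_ne hv₁ ht
  have h₆ := letter_ne hv₂ hs
  rintro z ⟨hz, hz'⟩
  simp only [Set.mem_insert_iff, Set.mem_singleton_iff] at hz hz' ⊢
  grind

theorem Obstruction.hasFork_of_forall_isLeaf (hO : Obstruction G T) (hm : HasFork G T m c)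
    (hall : ∀ q ∉ T, G.Adj m q → ∃ s, IsLeaf G T m s q) (b : V) : HasFork G T m b := by
  have hT := hO.isNClique.card_eq
  obtain ⟨s, hs, hsc, -⟩ := exists_mem_ne hT c c
  obtain ⟨t, ht, hts, htc⟩ := exists_mem_ne hT s c
  obtain ⟨r, hr, hrs, hrt, hcases⟩ := exists_third_vertex hT hs ht hts.symm
  obtain ⟨u, hu⟩ := hm s hs hsc
  obtain ⟨v, hv⟩ := hm t ht htc
  obtain ⟨d, -, -, hd, -, hrd, -⟩ := hO.exists_two_adj_notMem r hr
  have hnot : ∀ q ∉ T, q ∉ ({s, t} : Set V) := by rintro q hq (rfl | rfl) <;> exact hq ‹_›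
  obtain ⟨q, hq, hqS, w, hw⟩ := hO.exists_leaf_letter_notMem (ncard_pair_le_two s t)
    (hnot m hu.base_notMem) hu (hnot u hu.notMem) (fun q hmq hq _ => hall q hq hmq) hr
    (by simp [hrs, hrt]) hrd (hnot d hd)
  obtain rfl : q = r := by
    simp only [Set.mem_insert_iff, Set.mem_singleton_iff, not_or] at hqS
    exact ((hcases q hq).resolve_left hqS.1).resolve_left hqS.2
  intro p hp _
  obtain rfl | rfl | rfl := hcases p hp
  exacts [⟨u, hu⟩, ⟨v, hv⟩, ⟨w, hw⟩]

/-- Two (possibly equal) bases `m` and `m'` in one component of `G - T` whose missing letters `c`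
and `b` differ; when `m = m'`, all neighbours of `m` off `T` are leaves. -/
structure IsForkPair (G : SimpleGraph V) (T : Finset V) (m m' b c : V) : Prop where
  left_mem : b ∈ T
  right_mem : c ∈ T
  ne : b ≠ c
  hasFork_left : HasFork G T m c
  hasFork_right : HasFork G T m' b
  reachableIn : ReachableIn G (T : Set V)ᶜ m m'
  exists_isLeaf : m = m' → ∀ q ∉ T, G.Adj m q → ∃ s, IsLeaf G T m s q

theorem IsLongestOff.exists_isForkPair [Finite V] (hL : IsLongestOff G T W x m y n)
    (hO : ReducedObstruction G T) : ∃ m' b c, IsForkPair G T m m' b c := by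
  obtain ⟨W', m', hL', hreach⟩ := hL.exists_reverse
  obtain ⟨c, hc, hm⟩ := hL.exists_hasFork hO
  by_cases hmm' : m = m'
  · subst hmm'
    have hall : ∀ q ∉ T, G.Adj m q → ∃ s, IsLeaf G T m s q := by
      intro q hq hmq
      by_cases hqW : q ∈ W
      · obtain rfl := hO.eq_of_adj_of_mem_path hL.tail hL.disjoint hqW hL.tail.right_mem hmq
          hL'.adj.symm
        exact hL'.exists_isLeaf hO
      · exact hL.exists_isLeaf_of_adj hO hmq hq hqW
    obtain ⟨b, hb, hbc, -⟩ := exists_mem_ne hO.isNClique.card_eq c c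
    exact ⟨m, b, c, hb, hc, hbc, hm, hO.hasFork_of_forall_isLeaf hm hall b, hreach, fun _ => hall⟩
  · obtain ⟨b, hb, hm'⟩ := hL'.exists_hasFork hO
    refine ⟨m', b, c, hb, hc, ?_, hm, hm', hreach, fun h => (hmm' h).elim⟩
    rintro rfl
    exact hmm' (hO.eq_of_hasFork hm hm')

theorem ReducedObstruction.exists_isForkPair [Finite V] (hO : ReducedObstruction G T) (hx : x ∉ T)
    (hxy : G.Adj x y) :
    ∃ m m' b c, IsForkPair G T m m' b c ∧ ReachableIn G (T : Set V)ᶜ x m := by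
  obtain ⟨W, a, m, y, n, hL, hxm⟩ := hO.exists_isLongestOff hx hxy
  obtain ⟨m', b, c, h⟩ := hL.exists_isForkPair hO
  exact ⟨m, m', b, c, h, hxm⟩

theorem IsForkPair.reachableIn_of_adj [Finite V] (hF : IsForkPair G T m m' b c)
    (hO : ReducedObstruction G T) (hx : x ∉ T) (hxy : G.Adj x y) :
    ReachableIn G (T : Set V)ᶜ x m := by
  obtain ⟨m₁, m₁', b₁, c₁, hF₁, hxm⟩ := hO.exists_isForkPair hx hxy
  obtain ⟨r, hr, hrb, hrc, hcases⟩ := exists_third_vertex hO.isNClique.card_eq hF.left_mem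
    hF.right_mem hF.ne
  obtain rfl | rfl | rfl | rfl : c₁ = c ∨ c₁ = b ∨ b₁ = c ∨ b₁ = b := by
    have h₁ := hcases c₁ hF₁.right_mem
    have h₂ := hcases b₁ hF₁.left_mem
    have h₃ := hF₁.ne
    grind
  · rwa [hO.eq_of_hasFork hF.hasFork_left hF₁.hasFork_left]
  · rw [← hO.eq_of_hasFork hF.hasFork_right hF₁.hasFork_left] at hxm
    exact hxm.trans hF.reachableIn.symm
  · rw [hO.eq_of_hasFork hF.hasFork_left hF₁.hasFork_right]
    exact hxm.trans hF₁.reachableIn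
  · have h := hF.reachableIn.symm
    rw [hO.eq_of_hasFork hF.hasFork_right hF₁.hasFork_right] at h
    exact (hxm.trans hF₁.reachableIn).trans h

end LongestPaths

section Contradiction

variable {V : Type*} {G : SimpleGraph V} {T : Finset V} {U U₁ U₂ R W : Set V}
  {a b c m m' u v w x s t : V} {h i j k : ℕ}

namespace IsLeaf

theorem mod_four_of_isPathOn (hu : IsLeaf G T m a u) (hO : Obstruction G T)
    (hU : IsPathOn G U x m k) (hUT : Disjoint (T : Set V) U) (hb : b ∈ T) (hbx : G.Adj b x)
    (hab : a ≠ b) : (k + 3) % 4 ≤ 1 := by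
  have hux : u ≠ x := by rintro rfl; exact hab (hu.eq_letter hbx.symm hb).symm
  have hpath := hU.symm.cons hu.adj_base (hu.notMem_of_isPathOn hU hUT hux hu.adj_base.ne)
  exact hO.mod_four_of_adj_ends hpath (Set.disjoint_insert_right.2 ⟨hu.notMem, hUT⟩) hu.letter_mem
    hb hab hu.adj_letter.symm hbx

theorem not_dvd_of_isPathOn (hu : IsLeaf G T m b u) (hO : Obstruction G T)
    (hU : IsPathOn G U x m k) (hUT : Disjoint (T : Set V) U) (hbx : G.Adj b x) (hux : u ≠ x) :
    ¬ 4 ∣ k + 3 := by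
  have hpath := hU.symm.cons hu.adj_base (hu.notMem_of_isPathOn hU hUT hux hu.adj_base.ne)
  exact hO.not_dvd_of_adj_ends hpath (Set.disjoint_insert_right.2 ⟨hu.notMem, hUT⟩) hux
    hu.letter_mem hu.adj_letter.symm hbx

theorem mod_four_eq_two (hu : IsLeaf G T m a u) (hv : IsLeaf G T m b v) (hO : Obstruction G T)
    (hab : a ≠ b) (hU : IsPathOn G U x m k) (hUT : Disjoint (T : Set V) U) (hbx : G.Adj b x)
    (hvx : v ≠ x) : k % 4 = 2 := by
  have h₁ := hu.mod_four_of_isPathOn hO hU hUT hv.letter_mem hbx hab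
  have h₂ := hv.not_dvd_of_isPathOn hO hU hUT hbx hvx
  omega

theorem spine_mod_four (hu : IsLeaf G T m a u) (hv : IsLeaf G T m b v) (hw : IsLeaf G T m' a w)
    (hO : Obstruction G T) (hab : a ≠ b) (hmm' : m ≠ m') (hum' : u ≠ m') (hvm' : v ≠ m')
    (hW : IsPathOn G W m m' k) (hWT : Disjoint (T : Set V) W) : k % 4 = 1 := by
  have huW := hu.notMem_of_isPathOn hW hWT hu.adj_base.ne hum'
  have hvW := hv.notMem_of_isPathOn hW hWT hv.adj_base.ne hvm'
  have hwu : w ≠ u := by rintro rfl; exact hmm' (hu.base_unique hw)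
  have h₁ := hw.mod_four_of_isPathOn hO (hW.cons hv.adj_base hvW)
    (Set.disjoint_insert_right.2 ⟨hv.notMem, hWT⟩) hv.letter_mem hv.adj_letter.symm hab
  have h₂ := hw.not_dvd_of_isPathOn hO (hW.cons hu.adj_base huW)
    (Set.disjoint_insert_right.2 ⟨hu.notMem, hWT⟩) hu.adj_letter.symm hwu
  omega

/-- The path from `x` to `m'` extended by `w` closes up with the path through the leaves at `m` to
a cycle of length `k + 7`. -/
theorem not_dvd_of_isPathOn_base (hu : IsLeaf G T m a u) (hv : IsLeaf G T m b v)
    (hw : IsLeaf G T m' a w) (hO : Obstruction G T) (hab : a ≠ b) (hmm' : m ≠ m') (hum' : u ≠ m')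
    (hvm' : v ≠ m') (hbx : G.Adj b x) (hvx : v ≠ x) (hU : IsPathOn G U x m' k)
    (hUT : Disjoint (T : Set V) U) (hm : m ∉ U) : ¬ 4 ∣ k + 3 := fun hdvd => by
  have hux : u ≠ x := by rintro rfl; exact hab (hu.eq_letter hbx.symm hv.letter_mem).symm
  have hwx : w ≠ x := by rintro rfl; exact hab (hw.eq_letter hbx.symm hv.letter_mem).symm
  have huw : u ≠ w := by rintro rfl; exact hmm' (hu.base_unique hw)
  have hvw : v ≠ w := by rintro rfl; exact hmm' (hv.base_unique hw)
  have huU := hu.notMem_of_isPathOn hU hUT hux hum'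
  have hvU := hv.notMem_of_isPathOn hU hUT hvx hvm'
  have hwU := hw.notMem_of_isPathOn hU hUT hwx hw.adj_base.ne
  have hnotU : ∀ t ∈ T, t ∉ insert w U := fun t ht h =>
    h.elim (fun h => hw.notMem (h ▸ ht)) fun h => hUT.le_bot ⟨ht, h⟩
  have hwm : w ≠ m := by
    rintro rfl; exact hu.not_isLeaf_base hv hab hw
  have houter := ((hU.symm.cons hw.adj_base hwU).cons hw.adj_letter.symm
    (hnotU a hu.letter_mem)).symm.cons hbx fun h =>
      h.elim hab.symm (hnotU b hv.letter_mem)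
  refine hO.noFour.not_dvd_add houter (hv.isPathOn_letter hu hab.symm) ?_ hab.symm (by omega)
    (by omega)
  simp only [Set.subset_def, Set.mem_inter_iff, Set.mem_insert_iff, Set.mem_singleton_iff]
  have hTleaf : ∀ t ∈ T, t ≠ u ∧ t ≠ v ∧ t ≠ m := fun t ht =>
    ⟨ne_of_mem_of_not_mem ht hu.notMem, ne_of_mem_of_not_mem ht hv.notMem,
      ne_of_mem_of_not_mem ht hu.base_notMem⟩
  grind [hTleaf a hu.letter_mem, hTleaf b hv.letter_mem]

theorem not_branch (hu : IsLeaf G T m a u) (hv : IsLeaf G T m b v) (hw : IsLeaf G T m' a w)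
    (hO : Obstruction G T) (hab : a ≠ b) (hmm' : m ≠ m') (hum' : u ≠ m') (hvm' : v ≠ m')
    (hbx : G.Adj b x) (hvx : v ≠ x) (hR : IsPathOn G R x s h) (hU₁ : IsPathOn G U₁ m s i)
    (hU₂ : IsPathOn G U₂ s m' j) (hinter : U₁ ∩ U₂ = {s}) (hRU : R ∩ (U₁ ∪ U₂) ⊆ {s})
    (hRT : Disjoint (T : Set V) R) (hUT : Disjoint (T : Set V) (U₁ ∪ U₂)) : False := by
  obtain ⟨hT₁, hT₂⟩ := Set.disjoint_union_right.1 hUT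
  have hR₁ : R ∩ U₁ ⊆ {s} := fun q hq => hRU ⟨hq.1, .inl hq.2⟩
  have hR₂ : R ∩ U₂ ⊆ {s} := fun q hq => hRU ⟨hq.1, .inr hq.2⟩
  have hlong := hR.append hU₂ hR₂
  have hD := hu.spine_mod_four hv hw hO hab hmm' hum' hvm' (hU₁.append hU₂ hinter.subset) hUT
  have hi := hu.mod_four_eq_two hv hO hab (hR.append hU₁.symm hR₁) (hRT.union_right hT₁) hbx hvx
  have hj := hw.mod_four_of_isPathOn hO hlong (hRT.union_right hT₂) hv.letter_mem hbx hab
  have hi_odd : i % 2 = 1 := by omega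
  have hm : m ∉ R ∪ U₂ := fun hm => by
    have hms : m = s := hm.elim (fun hm => hR₁ ⟨hm, hU₁.left_mem⟩)
      fun hm => hinter.subset ⟨hU₁.left_mem, hm⟩
    subst hms
    simp [hU₁.length_eq_zero] at hi_odd
  exact hu.not_dvd_of_isPathOn_base hv hw hO hab hmm' hum' hvm' hbx hvx hlong
    (hRT.union_right hT₂) hm (by omega)

end IsLeaf

theorem Obstruction.exists_adj_notMem_ne (hO : Obstruction G T) (ht : t ∈ T) (v : V) :
    ∃ x ∉ T, G.Adj t x ∧ x ≠ v := by
  obtain ⟨d, d', hdd', hd, hd', htd, htd'⟩ := hO.exists_two_adj_notMem t ht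
  by_cases hdv : d = v
  exacts [⟨d', hd', htd', hdv ▸ hdd'.symm⟩, ⟨d, hd, htd, hdv⟩]

theorem HasFork.not_isLeaf (hm : HasFork G T m c) (hcard : T.card = 3) :
    ¬ IsLeaf G T m' t m := by
  obtain ⟨r, hr, hrc, -⟩ := exists_mem_ne hcard c c
  obtain ⟨s, hs, hsr, hsc⟩ := exists_mem_ne hcard r c
  obtain ⟨⟨u, hu⟩, v, hv⟩ := hm r hr hrc, hm s hs hsc
  exact hu.not_isLeaf_base hv hsr.symm

namespace ReducedObstruction

theorem not_star (hO : ReducedObstruction G T) (hu : IsLeaf G T m a u) (hv : IsLeaf G T m b v)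
    (hab : a ≠ b) (hbx : G.Adj b x) (hvx : v ≠ x) (hxm : ReachableIn G (T : Set V)ᶜ x m)
    (hall : ∀ q ∉ T, G.Adj m q → ∃ s, IsLeaf G T m s q) : False := by
  obtain ⟨U, hUT, k, hU⟩ := hxm.exists_isPathOn
  have hUT' := (Set.subset_compl_iff_disjoint_left.1 hUT)
  have hmod : ∀ {U k}, IsPathOn G U x m k → Disjoint (T : Set V) U → k % 4 = 2 := fun hU hUT =>
    hu.mod_four_eq_two hv hO.toObstruction hab hU hUT hbx hvx
  have hk := hmod hU hUT'
  obtain ⟨j, rfl⟩ := Nat.exists_eq_add_of_le' (show 1 ≤ k by omega)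
  obtain ⟨q, hmq, hq⟩ := hU.symm.uncons
  have hqT := hUT hq.left_mem.1
  obtain ⟨s, hqs⟩ := hall q hqT hmq
  have hqx : q ≠ x := by
    rintro rfl
    have := hmod (.of_adj hmq.symm) (Set.disjoint_right.2 (by
      rintro z (rfl | rfl)
      exacts [hqT, hu.base_notMem]))
    omega
  exact hqs.notMem_of_isPathOn hU hUT' hqx hmq.ne' hq.left_mem.1

protected theorem false [Finite V] (hO : ReducedObstruction G T) : False := by
  have hT := hO.isNClique.card_eq
  have hO' := hO.toObstruction
  obtain ⟨t, ht⟩ : T.Nonempty := Finset.card_pos.1 (by omega)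
  obtain ⟨d, hd, htd, -⟩ := hO'.exists_adj_notMem_ne ht t
  obtain ⟨m, m', b, c, hF, -⟩ := hO.exists_isForkPair hd htd.symm
  obtain ⟨a, ha, hab, hac⟩ := exists_mem_ne hT b c
  obtain ⟨u, hu⟩ := hF.hasFork_left a ha hac
  obtain ⟨v, hv⟩ := hF.hasFork_left b hF.left_mem hF.ne
  obtain ⟨w, hw⟩ := hF.hasFork_right a ha hab
  obtain ⟨x, hx, hbx, hxv⟩ := hO'.exists_adj_notMem_ne hF.left_mem v
  have hxm := hF.reachableIn_of_adj hO hx hbx.symm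
  by_cases hmm' : m = m'
  · exact hO.not_star hu hv hab hbx hxv.symm hxm (hF.exists_isLeaf hmm')
  have hleaf_ne : ∀ {s z}, IsLeaf G T m s z → z ≠ m' := by
    rintro s z hz rfl; exact hF.hasFork_right.not_isLeaf hT hz
  obtain ⟨W, hWT, k, hW⟩ := hF.reachableIn.exists_isPathOn
  obtain ⟨s, hsW, hs, hhit⟩ := hxm.exists_first_hit hW.left_mem
  obtain ⟨R, hRsub, h, hR⟩ := hhit.exists_isPathOn
  obtain ⟨U₁, U₂, i, j, -, rfl, hinter, h₁, h₂⟩ := hW.split hsW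
  refine hu.not_branch hv hw hO' hab hmm' (hleaf_ne hu) (hleaf_ne hv) hbx hxv.symm hR h₁ h₂ hinter
    ?_ (Set.disjoint_right.2 fun q hq => ?_) (Set.subset_compl_iff_disjoint_left.1 hWT)
  · exact fun q hq => (hRsub hq.1).resolve_right fun h => h.right_mem.2 hq.2
  · obtain rfl | h := hRsub hq
    exacts [hs, h.right_mem.1]

end ReducedObstruction

protected theorem Obstruction.false [Finite V] (hO : Obstruction G T) : False :=
  let ⟨_, hH⟩ := hO.exists_reduced; hH.false

end Contradiction

section Faces

variable {V : Type*} {G : SimpleGraph V} {T : Finset V} {S : Set V}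
  {a b t u v w x y : V}

theorem ReachableIn.of_reachable_deleteVerts (h : (deleteVerts G S).Reachable a b) (ha : a ∉ S) :
    ReachableIn G Sᶜ a b := by
  obtain ⟨p⟩ := h
  induction p with
  | nil => exact .refl ha
  | cons h _ ih =>
    obtain ⟨hadj, -, hS⟩ := deleteVerts_adj.1 h
    exact .cons hadj ha (ih hS)

theorem EssentiallyThreeConnected.edgeInseparable (hG : EssentiallyThreeConnected G) :
    EdgeInseparable G := fun S hS a a' b b' haa' hbb' ha ha' hb hb' =>
  .of_reachable_deleteVerts (hG.2 S hS a a' b b' haa'.ne hbb'.ne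
    (deleteVerts_adj.2 ⟨haa', ha, ha'⟩).reachable (deleteVerts_adj.2 ⟨hbb', hb, hb'⟩).reachable) ha

theorem mem_edges_of_length_eq_three {c : G.Walk u u} (hc : c.length = 3) (hx : x ∈ c.support)
    (hy : y ∈ c.support) (hxy : x ≠ y) : s(x, y) ∈ c.edges := by
  match c, hc with
  | .cons h₁ (.cons h₂ (.cons h₃ .nil)), _ =>
    simp only [SimpleGraph.Walk.support_cons, SimpleGraph.Walk.support_nil,
      SimpleGraph.Walk.edges_cons, SimpleGraph.Walk.edges_nil, List.mem_cons, Sym2.eq_iff] at *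
    grind

theorem isNClique_support_of_length_eq_three [DecidableEq V] {c : G.Walk u u}
    (hc : c.length = 3) : G.IsNClique 3 c.support.toFinset := by
  refine ⟨fun x hx y hy hxy => c.adj_of_mem_edges (mem_edges_of_length_eq_three hc
    (List.mem_toFinset.1 hx) (List.mem_toFinset.1 hy) hxy), ?_⟩
  match c, hc with
  | .cons h₁ (.cons h₂ (.cons h₃ .nil)), _ =>
    rw [Finset.card_eq_three]
    exact ⟨_, _, _, h₁.ne, h₃.ne', h₂.ne, by
      ext
      simp only [SimpleGraph.Walk.support_cons, SimpleGraph.Walk.support_nil, List.mem_toFinset,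
        List.mem_cons, Finset.mem_insert, Finset.mem_singleton]
      grind⟩

theorem exists_ne_mem_edges_of_isCycle {c : G.Walk u u} (hc : c.IsCycle)
    (h : s(v, w) ∈ c.edges) : ∃ w' ≠ w, s(v, w') ∈ c.edges := by
  have hcard := hc.ncard_neighborSet_toSubgraph_eq_two (c.fst_mem_support_of_mem_edges h)
  obtain ⟨w', hw', hne⟩ := Set.exists_ne_of_one_lt_ncard (hcard ▸ Nat.one_lt_two) w
  exact ⟨w', hne, c.mem_edges_toSubgraph.1 hw'⟩

theorem exists_adj_notMem_of_degree_ne_two [Fintype V] [DecidableRel G.Adj]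
    (hT : G.IsNClique 3 T) (ht : t ∈ T) (hdeg : G.degree t ≠ 2) : ∃ d ∉ T, G.Adj t d := by
  classical
  by_contra! hcon
  have hN : G.neighborFinset t = T.erase t := by
    ext z
    rw [SimpleGraph.mem_neighborFinset, Finset.mem_erase]
    exact ⟨fun h => ⟨h.ne', by_contra fun hz => hcon z hz h⟩,
      fun ⟨hzt, hz⟩ => hT.isClique ht hz hzt.symm⟩
  rw [← SimpleGraph.card_neighborFinset_eq_degree, hN, Finset.card_erase_of_mem ht,
    hT.card_eq] at hdeg
  exact hdeg rfl

theorem of_countP_le_countP {α : Type*} {l : List α} {p q : α → Bool} {a : α}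
    (hpq : ∀ a ∈ l, p a → q a) (hle : l.countP q ≤ l.countP p) (ha : a ∈ l) (hq : q a) : p a := by
  have hcount : (l.filter q).countP p = (l.filter q).length := by
    refine le_antisymm List.countP_le_length ?_
    rw [List.countP_filter, ← List.countP_eq_length_filter]
    exact hle.trans (List.countP_mono_left fun a ha hp => by simp [hp, hpq a ha hp])
  exact List.countP_eq_length.1 hcount a (List.mem_filter.2 ⟨ha, hq⟩)

/-- A list of cycles of `G`, the faces, such that every edge of `G` lies on exactly two of them. -/
structure IsCycleDoubleCover [DecidableEq V] (G : SimpleGraph V)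
    (faces : List (Σ' v : V, G.Walk v v)) : Prop where
  isCycle : ∀ f ∈ faces, f.2.IsCycle
  edgeTwice : ∀ e ∈ G.edgeSet, (faces.countP fun f => decide (e ∈ f.2.edges)) = 2

namespace IsCycleDoubleCover

variable [DecidableEq V] {faces : List (Σ' v : V, G.Walk v v)}

theorem exists_mem_edges (hF : IsCycleDoubleCover G faces) (h : G.Adj v w) :
    ∃ f ∈ faces, s(v, w) ∈ f.2.edges := by
  have hpos : 0 < faces.countP fun f => decide (s(v, w) ∈ f.2.edges) := by
    rw [hF.edgeTwice _ h]; norm_num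
  simpa only [List.countP_pos_iff, decide_eq_true_eq] using hpos

theorem length_eq_three (hF : IsCycleDoubleCover G faces) (hT : G.IsNClique 3 T)
    (hfaces : ∀ f ∈ faces, f.2.length = 3 → f.2.support.toFinset = T)
    (htwo : 2 ≤ faces.countP fun f => decide (f.2.length = 3)) (hx : x ∈ T) (hy : y ∈ T)
    (hxy : x ≠ y) {g : Σ' v : V, G.Walk v v} (hg : g ∈ faces) (hgxy : s(x, y) ∈ g.2.edges) :
    g.2.length = 3 := by
  refine of_decide_eq_true (of_countP_le_countP (p := fun f : Σ' v : V, G.Walk v v =>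
    decide (f.2.length = 3)) (q := fun f => decide (s(x, y) ∈ f.2.edges)) (fun f hf hf3 => ?_) ?_ hg
    (decide_eq_true hgxy))
  · have hf3 := of_decide_eq_true hf3
    have hmem : ∀ z ∈ T, z ∈ f.2.support := fun z hz =>
      List.mem_toFinset.1 ((hfaces f hf hf3).symm ▸ hz)
    exact decide_eq_true (mem_edges_of_length_eq_three hf3 (hmem x hx) (hmem y hy) hxy)
  · rwa [hF.edgeTwice _ (hT.isClique hx hy hxy)]

theorem obstruction (hF : IsCycleDoubleCover G faces) (hG : NoFourDvdCycle G)
    (hE : EdgeInseparable G) (hT : G.IsNClique 3 T)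
    (hfaces : ∀ f ∈ faces, f.2.length = 3 → f.2.support.toFinset = T)
    (htwo : 2 ≤ faces.countP fun f => decide (f.2.length = 3))
    (hout : ∀ t ∈ T, ∃ d ∉ T, G.Adj t d) : Obstruction G T := by
  refine ⟨hG, hE, hT, fun t ht => ?_, fun v w hvw => ?_⟩
  · obtain ⟨d, hd, htd⟩ := hout t ht
    obtain ⟨g, hg, hgd⟩ := hF.exists_mem_edges htd
    obtain ⟨d', hd'd, hgd'⟩ := exists_ne_mem_edges_of_isCycle (hF.isCycle g hg) hgd
    have htd' := g.2.adj_of_mem_edges hgd'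
    refine ⟨d, d', hd'd.symm, hd, fun hd' => hd ?_, htd, htd'⟩
    rw [← hfaces g hg (hF.length_eq_three hT hfaces htwo ht hd' htd'.ne hg hgd')]
    exact List.mem_toFinset.2 (g.2.snd_mem_support_of_mem_edges hgd)
  · obtain ⟨f, hf, hfw⟩ := hF.exists_mem_edges hvw
    obtain ⟨w', hw'w, hfw'⟩ := exists_ne_mem_edges_of_isCycle (hF.isCycle f hf) hfw
    exact ⟨w', hw'w, f.2.adj_of_mem_edges hfw'⟩

end IsCycleDoubleCover

end Faces

theorem stmt_15_general {V : Type*} [Fintype V] [DecidableEq V] (G : SimpleGraph V)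
    [DecidableRel G.Adj] {faces : List (Σ' v : V, G.Walk v v)} (hF : IsCycleDoubleCover G faces)
    (hG : NoFourDvdCycle G) (hE : EdgeInseparable G)
    (hdeg : ∀ f ∈ faces, f.2.length = 3 → ∀ v ∈ f.2.support, G.degree v ≠ 2) :
    (faces.countP fun f => decide (f.2.length = 3)) ≤ 1 := by
  by_contra! htwo
  obtain ⟨f, hf, hf3⟩ : ∃ f ∈ faces, f.2.length = 3 := by
    simpa only [List.countP_pos_iff, decide_eq_true_eq] using Nat.zero_lt_of_lt htwo
  have hclique := fun g : Σ' v : V, G.Walk v v => isNClique_support_of_length_eq_three (c := g.2)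
  have hout : ∀ g ∈ faces, g.2.length = 3 →
      ∀ t ∈ g.2.support.toFinset, ∃ d ∉ g.2.support.toFinset, G.Adj t d := fun g hg hg3 t ht =>
    exists_adj_notMem_of_degree_ne_two (hclique g hg3) ht (hdeg g hg hg3 t (List.mem_toFinset.1 ht))
  have hrobust := fun g hg hg3 => robust_of_isNClique (hclique g hg3) (hout g hg hg3)
  exact (hF.obstruction hG hE (hclique f hf3) (fun g hg hg3 =>
    eq_of_isNClique_three hG hE (hclique g hg3) (hclique f hf3) (hrobust g hg hg3)
      (hrobust f hf hf3)) htwo (hout f hf hf3)).false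

/-- Let `G` be a plane graph with no cycle of length divisible by 4, in which no
degree-2 vertex lies on a 3-face, and which is essentially 3-connected.  Then `G` has
at most one 3-face. -/
theorem stmt_15 {V : Type*} [Fintype V] [DecidableEq V] (G : SimpleGraph V)
    [DecidableRel G.Adj] (F : PlaneFaces G)
    (hno : ¬ ∃ (u : V) (c : G.Walk u u), c.IsCycle ∧ 4 ∣ c.length)
    (h2face : ∀ f ∈ F.faces, f.2.length = 3 →
      ∀ v ∈ f.2.support, G.degree v ≠ 2)
    (hess : EssentiallyThreeConnected G) :
    (F.faces.countP fun f => decide (f.2.length = 3)) ≤ 1 :=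
  stmt_15_general G ⟨F.isCycle, F.edgeTwice⟩ (fun u c hc h4 => hno ⟨u, c, hc, h4⟩)
    hess.edgeInseparable h2face
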